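/- arXiv:1810.07131 — 2 statements merged into one kernel-verified Lean document; each statement's English description precedes it below -/
import Mathlib

section
/- Let d ≥ 1 be an integer, δ > 0, k > 0, and α ∈ ((d−1)/2, d+2) with α ≠ d. Then lim_{ε→0^+} ∫_0^∞ [ (2/(k r))^{(d−2)/2} J_{(d−2)/2}(k r) − χ_{[0,δ]}(r)/Γ(d/2) ] (r + ε)^{d−1−α} dr = (k/2)^{α−d} Γ((d−α)/2) / (2 Γ(α/2)) − δ^{d−α} / ((d−α) Γ(d/2)), where for each fixed ε > 0 the integral over (0, ∞) is understood as the improper limit lim_{R→∞} ∫_0^R. -/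
open MeasureTheory Filter Set

/-- The Bessel function of the first kind of order `ν`,
`J_ν(x) = Σ_{m=0}^∞ (−1)^m (x/2)^{ν+2m} / (m! Γ(ν+m+1))`. -/
noncomputable def besselJ (ν x : ℝ) : ℝ :=
  ∑' m : ℕ, (-1) ^ m * (x / 2) ^ (ν + 2 * (m : ℝ)) /
    ((Nat.factorial m : ℝ) * Real.Gamma (ν + (m : ℝ) + 1))

/-!
Put `s = d - α`, `ν = (d - 2) / 2`, and let `F x = (2 / x) ^ ν * J_ν(x)`, an even entire function.
Replacing `r^(s-1)` by `(r + ε)^(s-1)` is harmless near `0` by dominated convergence, and on the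
tail by Abel summation against the factor `(1 + ε / r)^(s-1)`, whose derivative has integral `O(ε)`.
Hence it suffices that Hadamard's finite part of `∫_0^R F(k r) r^(s-1) dr` converges as `R → ∞` to
the analytically continued Mellin transform of `F`. An energy estimate for Bessel's equation gives
`F = O(x^(-(ν + 1/2)))`, so the Mellin integral converges absolutely for `0 < s < ν + 1/2`; there it
is computed by writing a power of `r` as a superposition of Gaussians, against which the series of
`F` integrates termwise. The other values of `s` are reached by integration by parts, which relates
`(ν, s)` both to `(ν + 1, s)` and to `(ν + 1, s + 2)`, with boundary terms vanishing at infinity.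
-/

open Asymptotics Topology

section ShiftedPowers

lemma rpow_le_rpow_add_rpow {x y z : ℝ} (p : ℝ) (hx : 0 < x) (hxy : x ≤ y) (hyz : y ≤ z) :
    y ^ p ≤ x ^ p + z ^ p := by
  have hy : 0 < y := hx.trans_le hxy
  have hxp := Real.rpow_nonneg hx.le p
  have hzp := Real.rpow_nonneg (hy.le.trans hyz) p
  rcases le_total 0 p with hp | hp
  · linarith [Real.rpow_le_rpow hy.le hyz hp]
  · linarith [Real.rpow_le_rpow_of_nonpos hx hxy hp]

lemma tendsto_add_rpow_nhdsGT (p : ℝ) {r : ℝ} (hr : 0 < r) :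
    Tendsto (fun ε : ℝ => (r + ε) ^ p) (𝓝[>] 0) (𝓝 (r ^ p)) := by
  have h : ContinuousAt (fun ε : ℝ => (r + ε) ^ p) 0 :=
    (continuousAt_const.add continuousAt_id).rpow_const (Or.inl (by simpa using hr.ne'))
  simpa using h.tendsto.mono_left nhdsWithin_le_nhds

lemma tendsto_integral_Ioc_mul_add_rpow {f : ℝ → ℝ} {p δ : ℝ} (hf : IntegrableOn f (Ioc 0 δ))
    (hfp : IntegrableOn (fun r => f r * r ^ p) (Ioc 0 δ)) :
    Tendsto (fun ε : ℝ => ∫ r in Ioc 0 δ, f r * (r + ε) ^ p) (𝓝[>] 0)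
      (𝓝 (∫ r in Ioc 0 δ, f r * r ^ p)) := by
  refine tendsto_integral_filter_of_dominated_convergence
    (fun r => ‖f r * r ^ p‖ + ‖f r‖ * (δ + 1) ^ p) ?_ ?_
    (hfp.norm.add (hf.norm.mul_const _)) ?_
  · refine Eventually.of_forall fun ε => hf.aestronglyMeasurable.mul ?_
    exact (by fun_prop : Measurable fun r : ℝ => (r + ε) ^ p).aestronglyMeasurable
  · filter_upwards [Ioc_mem_nhdsGT (zero_lt_one' ℝ)] with ε hε
    filter_upwards [ae_restrict_mem measurableSet_Ioc] with r hr
    have hrp := Real.rpow_nonneg hr.1.le p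
    have hrε := Real.rpow_nonneg (add_pos hr.1 hε.1).le p
    rw [norm_mul, norm_mul, Real.norm_of_nonneg hrp, Real.norm_of_nonneg hrε, ← mul_add]
    gcongr
    exact rpow_le_rpow_add_rpow p hr.1 (by linarith [hε.1]) (add_le_add hr.2 hε.2)
  · filter_upwards [ae_restrict_mem measurableSet_Ioc] with r hr
    exact (tendsto_add_rpow_nhdsGT p hr.1).const_mul _

lemma hasDerivAt_one_add_div_rpow (ε p : ℝ) {r : ℝ} (hr : 0 < r) (hε : 0 ≤ ε) :
    HasDerivAt (fun r : ℝ => (1 + ε / r) ^ p) (-(ε / r ^ 2) * p * (1 + ε / r) ^ (p - 1)) r := by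
  have hbase : HasDerivAt (fun r : ℝ => 1 + ε / r) (-(ε / r ^ 2)) r := by
    simpa [div_eq_mul_inv] using ((hasDerivAt_inv hr.ne').const_mul ε).const_add 1
  exact hbase.rpow_const (Or.inl (by positivity))

lemma abs_deriv_one_add_div_rpow_le (p : ℝ) {δ ε r : ℝ} (hδ : 0 < δ) (hr : δ ≤ r) (hε : 0 ≤ ε) :
    |-(ε / r ^ 2) * p * (1 + ε / r) ^ (p - 1)| ≤
      ε * |p| * (1 + ε / δ) ^ |p - 1| * r ^ (-2 : ℝ) := by
  have hr0 : 0 < r := hδ.trans_le hr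
  have hpow : (1 + ε / r) ^ (p - 1) ≤ (1 + ε / δ) ^ |p - 1| :=
    (Real.rpow_le_rpow_of_exponent_le (le_add_of_nonneg_right (by positivity))
      (le_abs_self _)).trans (Real.rpow_le_rpow (by positivity) (by gcongr) (abs_nonneg _))
  rw [abs_mul, abs_mul, abs_neg, abs_of_nonneg (by positivity : 0 ≤ ε / r ^ 2),
    abs_of_nonneg (by positivity : 0 ≤ (1 + ε / r) ^ (p - 1)), Real.rpow_neg hr0.le, Real.rpow_two]
  calc ε / r ^ 2 * |p| * (1 + ε / r) ^ (p - 1)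
      ≤ ε / r ^ 2 * |p| * (1 + ε / δ) ^ |p - 1| := by gcongr
    _ = ε * |p| * (1 + ε / δ) ^ |p - 1| * (r ^ 2)⁻¹ := by ring

lemma integrableOn_deriv_one_add_div_rpow (p : ℝ) {δ ε : ℝ} (hδ : 0 < δ) (hε : 0 ≤ ε) :
    IntegrableOn (fun r : ℝ => -(ε / r ^ 2) * p * (1 + ε / r) ^ (p - 1)) (Ioi δ) := by
  have hsq : IntegrableOn (fun r : ℝ => r ^ (-2 : ℝ)) (Ioi δ) :=
    integrableOn_Ioi_rpow_of_lt (by norm_num) hδ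
  refine (hsq.const_mul (ε * |p| * (1 + ε / δ) ^ |p - 1|)).mono' (by fun_prop) ?_
  filter_upwards [ae_restrict_mem measurableSet_Ioi] with r hr
  exact abs_deriv_one_add_div_rpow_le p hδ (le_of_lt hr) hε

lemma tendsto_one_add_div_rpow_atTop (ε p : ℝ) :
    Tendsto (fun r : ℝ => (1 + ε / r) ^ p) atTop (𝓝 1) := by
  have h : Tendsto (fun r : ℝ => 1 + ε / r) atTop (𝓝 (1 + 0)) :=
    tendsto_const_nhds.add (tendsto_const_nhds.div_atTop tendsto_id)
  simpa using h.rpow_const (p := p) (Or.inl (by norm_num))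

lemma tendsto_integral_deriv_one_add_div_rpow_mul {G : ℝ → ℝ} {δ M : ℝ} (p : ℝ) (hδ : 0 < δ)
    (hM : ∀ r ∈ Ici δ, |G r| ≤ M) :
    Tendsto (fun ε : ℝ => ∫ r in Ioi δ, -(ε / r ^ 2) * p * (1 + ε / r) ^ (p - 1) * G r)
      (𝓝[>] 0) (𝓝 0) := by
  set B : ℝ → ℝ := fun ε => ε * |p| * (1 + ε / δ) ^ |p - 1|
  have hsq : IntegrableOn (fun r : ℝ => r ^ (-2 : ℝ)) (Ioi δ) :=
    integrableOn_Ioi_rpow_of_lt (by norm_num) hδ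
  have hB : Tendsto B (𝓝[>] 0) (𝓝 0) := by
    have hpow : ContinuousAt (fun ε : ℝ => (1 + ε / δ) ^ |p - 1|) 0 :=
      ContinuousAt.rpow_const (by fun_prop) (Or.inr (abs_nonneg _))
    have h : ContinuousAt B 0 := (continuousAt_id.mul continuousAt_const).mul hpow
    simpa [B] using h.tendsto.mono_left nhdsWithin_le_nhds
  have hbound : Tendsto (fun ε => B ε * M * ∫ r in Ioi δ, r ^ (-2 : ℝ)) (𝓝[>] 0) (𝓝 0) := by
    simpa using (hB.mul_const M).mul_const (∫ r in Ioi δ, r ^ (-2 : ℝ))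
  refine squeeze_zero_norm' ?_ hbound
  filter_upwards [self_mem_nhdsWithin] with ε (hε : 0 < ε)
  rw [← integral_const_mul]
  refine norm_integral_le_of_norm_le (hsq.const_mul _) ?_
  filter_upwards [ae_restrict_mem measurableSet_Ioi] with r hr
  have hφ' := abs_deriv_one_add_div_rpow_le p hδ (le_of_lt hr) hε.le
  calc ‖-(ε / r ^ 2) * p * (1 + ε / r) ^ (p - 1) * G r‖
      ≤ (B ε * r ^ (-2 : ℝ)) * M := by
        rw [norm_mul]
        exact mul_le_mul hφ' (hM r (Ioi_subset_Ici_self hr)) (norm_nonneg _)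
          ((abs_nonneg _).trans hφ')
    _ = B ε * M * r ^ (-2 : ℝ) := by ring

end ShiftedPowers

section AbelSummation

lemma exists_abs_le_of_tendsto_atTop {f : ℝ → ℝ} {a L : ℝ} (hf : ContinuousOn f (Ici a))
    (hL : Tendsto f atTop (𝓝 L)) : ∃ M, ∀ x ∈ Ici a, |f x| ≤ M := by
  obtain ⟨b, hb⟩ := eventually_atTop.1 (hL.abs.eventually_le_const (lt_add_one |L|))
  obtain ⟨M, hM⟩ := (isCompact_Icc (a := a) (b := b)).exists_bound_of_continuousOn
    (hf.mono Icc_subset_Ici_self)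
  refine ⟨max M (|L| + 1), fun x hx => ?_⟩
  rcases le_total x b with hxb | hbx
  · exact (hM x ⟨hx, hxb⟩).trans (le_max_left _ _)
  · exact (hb x hbx).trans (le_max_right _ _)

lemma continuousOn_primitive_Ici {g : ℝ → ℝ} {a : ℝ} (hg : ContinuousOn g (Ici a)) :
    ContinuousOn (fun x => ∫ t in a..x, g t) (Ici a) := by
  intro x hx
  have hcont : ContinuousOn g (uIcc a (x + 1)) := hg.mono fun y hy => by
    rw [uIcc_of_le (by linarith [mem_Ici.1 hx])] at hy
    exact hy.1
  have hint : IntegrableOn g (uIcc a (x + 1)) := hcont.integrableOn_compact isCompact_uIcc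
  have h := intervalIntegral.continuousOn_primitive_interval hint
  rw [uIcc_of_le (by linarith [mem_Ici.1 hx])] at h
  refine (h x ⟨hx, by linarith⟩).mono_of_mem_nhdsWithin ?_
  exact mem_of_superset (inter_mem_nhdsWithin _ (Iic_mem_nhds (lt_add_one x))) fun y hy => hy

lemma hasDerivAt_primitive_of_continuousOn_Ici {g : ℝ → ℝ} {a x : ℝ}
    (hg : ContinuousOn g (Ici a)) (hx : a < x) :
    HasDerivAt (fun x => ∫ t in a..x, g t) (g x) x :=
  intervalIntegral.integral_hasDerivAt_right
    ((hg.mono Icc_subset_Ici_self).intervalIntegrable_of_Icc hx.le)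
    ((hg.mono Ioi_subset_Ici_self).stronglyMeasurableAtFilter isOpen_Ioi x hx)
    (hg.continuousAt (Ici_mem_nhds hx))

lemma tendsto_integral_mul_of_tendsto_integral {g φ φ' : ℝ → ℝ} {a L c : ℝ}
    (hg : ContinuousOn g (Ici a)) (hL : Tendsto (fun R => ∫ r in a..R, g r) atTop (𝓝 L))
    (hφ : ∀ r ∈ Ici a, HasDerivAt φ (φ' r) r) (hφ' : IntegrableOn φ' (Ioi a))
    (hc : Tendsto φ atTop (𝓝 c)) :
    Tendsto (fun R => ∫ r in a..R, φ r * g r) atTop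
      (𝓝 (c * L - ∫ r in Ioi a, φ' r * ∫ t in a..r, g t)) := by
  have hG := continuousOn_primitive_Ici hg
  obtain ⟨M, hM⟩ := exists_abs_le_of_tendsto_atTop hG hL
  have hφ'G : IntegrableOn (fun r => φ' r * ∫ t in a..r, g t) (Ioi a) := by
    refine hφ'.mul_bdd (c := M)
      ((hG.mono Ioi_subset_Ici_self).aestronglyMeasurable measurableSet_Ioi) ?_
    filter_upwards [ae_restrict_mem measurableSet_Ioi] with r hr
    exact hM r (Ioi_subset_Ici_self hr)
  refine ((hc.mul hL).sub (intervalIntegral_tendsto_integral_Ioi a hφ'G tendsto_id)).congr' ?_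
  filter_upwards [eventually_ge_atTop a] with R hR
  have hsub : uIcc a R ⊆ Ici a := by
    rw [uIcc_of_le hR]
    exact Icc_subset_Ici_self
  have hparts := intervalIntegral.integral_mul_deriv_eq_deriv_mul_of_hasDerivAt
    (fun r hr => (hφ r (hsub hr)).continuousAt.continuousWithinAt) (hG.mono hsub)
    (fun r hr => hφ r (hsub (Ioo_subset_Icc_self hr)))
    (fun r hr => hasDerivAt_primitive_of_continuousOn_Ici hg
      ((le_min le_rfl hR).trans_lt hr.1))
    ((intervalIntegrable_iff_integrableOn_Ioc_of_le hR).2 (hφ'.mono_set Ioc_subset_Ioi_self))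
    ((hg.mono hsub).intervalIntegrable)
  simpa using hparts.symm

lemma exists_tendsto_integral_mul_add_rpow {f : ℝ → ℝ} {p δ L : ℝ} (hδ : 0 < δ)
    (hf : ContinuousOn f (Ici δ))
    (hL : Tendsto (fun R => ∫ r in δ..R, f r * r ^ p) atTop (𝓝 L)) :
    ∃ J : ℝ → ℝ,
      (∀ ε, 0 < ε → Tendsto (fun R => ∫ r in δ..R, f r * (r + ε) ^ p) atTop (𝓝 (J ε))) ∧
      Tendsto J (𝓝[>] 0) (𝓝 L) := by
  have hg : ContinuousOn (fun r => f r * r ^ p) (Ici δ) :=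
    hf.mul (continuousOn_id.rpow_const fun r hr => Or.inl (hδ.trans_le hr).ne')
  obtain ⟨M, hM⟩ := exists_abs_le_of_tendsto_atTop (continuousOn_primitive_Ici hg) hL
  refine ⟨fun ε => 1 * L - ∫ r in Ioi δ, -(ε / r ^ 2) * p * (1 + ε / r) ^ (p - 1) *
    ∫ t in δ..r, f t * t ^ p, fun ε hε => ?_, ?_⟩
  · refine (tendsto_integral_mul_of_tendsto_integral hg hL
      (fun r hr => hasDerivAt_one_add_div_rpow ε p (hδ.trans_le hr) hε.le)
      (integrableOn_deriv_one_add_div_rpow p hδ hε.le)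
      (tendsto_one_add_div_rpow_atTop ε p)).congr' ?_
    filter_upwards [eventually_ge_atTop δ] with R hR
    refine intervalIntegral.integral_congr fun r hr => ?_
    rw [uIcc_of_le hR] at hr
    have hr0 : 0 < r := hδ.trans_le hr.1
    have hfactor : r + ε = (1 + ε / r) * r := by field_simp
    simp only [hfactor, Real.mul_rpow (by positivity : 0 ≤ 1 + ε / r) hr0.le]
    ring
  · simpa using (tendsto_integral_deriv_one_add_div_rpow_mul p hδ hM).const_sub (1 * L)

end AbelSummation

section FinitePart

/-- Hadamard's finite part of the possibly divergent integral `∫_0^R f(r) r^{s-1} dr`: the value of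
`f` at the origin is subtracted and its contribution restored as `f(0) R^s / s`. The definition is
meaningful for `s ≠ 0` and `(f(r) - f(0)) r^{s-1}` integrable near `0`. -/
noncomputable def finitePart (f : ℝ → ℝ) (s R : ℝ) : ℝ :=
  (∫ r in (0 : ℝ)..R, (f r - f 0) * r ^ (s - 1)) + f 0 * R ^ s / s

lemma intervalIntegrable_sub_mul_rpow {f : ℝ → ℝ} {s M R : ℝ} (hf : Continuous f) (hs : -2 < s)
    (hR : 0 ≤ R) (hM : ∀ r ∈ Icc 0 R, |f r - f 0| ≤ M * r ^ 2) :
    IntervalIntegrable (fun r => (f r - f 0) * r ^ (s - 1)) volume 0 R := by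
  have hbound : IntervalIntegrable (fun r : ℝ => M * r ^ (s + 1)) volume 0 R :=
    (intervalIntegral.intervalIntegrable_rpow' (by linarith)).const_mul M
  refine hbound.mono_fun' (by fun_prop) ?_
  rw [uIoc_of_le hR]
  filter_upwards [ae_restrict_mem measurableSet_Ioc] with r hr
  rw [norm_mul, Real.norm_of_nonneg (Real.rpow_nonneg hr.1.le _), Real.norm_eq_abs]
  calc |f r - f 0| * r ^ (s - 1) ≤ M * r ^ 2 * r ^ (s - 1) :=
        mul_le_mul_of_nonneg_right (hM r (Ioc_subset_Icc_self hr)) (Real.rpow_nonneg hr.1.le _)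
    _ = M * r ^ (s + 1) := by
      rw [mul_assoc, ← Real.rpow_two, ← Real.rpow_add hr.1]
      ring_nf

lemma finitePart_eq_add_integral {f : ℝ → ℝ} {s δ R : ℝ} (hf : Continuous f) (hs : s ≠ 0)
    (hδ : 0 < δ) (hR : δ ≤ R)
    (h0 : IntervalIntegrable (fun r => (f r - f 0) * r ^ (s - 1)) volume 0 δ) :
    finitePart f s R = finitePart f s δ + ∫ r in δ..R, f r * r ^ (s - 1) := by
  have hmem : (0 : ℝ) ∉ uIcc δ R := by
    rw [uIcc_of_le hR]
    exact fun h => hδ.not_ge h.1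
  have hpow : ContinuousOn (fun r : ℝ => r ^ (s - 1)) (uIcc δ R) :=
    continuousOn_id.rpow_const fun r hr => Or.inl fun h => hmem (h ▸ hr)
  have hfpow : IntervalIntegrable (fun r => f r * r ^ (s - 1)) volume δ R :=
    (hf.continuousOn.mul hpow).intervalIntegrable
  have hcpow : IntervalIntegrable (fun r => f 0 * r ^ (s - 1)) volume δ R :=
    (continuousOn_const.mul hpow).intervalIntegrable
  have hsub : ∫ r in δ..R, (f r - f 0) * r ^ (s - 1) =
      (∫ r in δ..R, f r * r ^ (s - 1)) - f 0 * ((R ^ s - δ ^ s) / s) := by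
    simp only [sub_mul]
    rw [intervalIntegral.integral_sub hfpow hcpow, intervalIntegral.integral_const_mul,
      integral_rpow (Or.inr ⟨fun h => hs (by linarith), hmem⟩), sub_add_cancel]
  rw [finitePart, finitePart, ← intervalIntegral.integral_add_adjacent_intervals h0
    (by simpa only [sub_mul] using hfpow.sub hcpow), hsub]
  ring

lemma finitePart_comp_mul_left (f : ℝ → ℝ) (s : ℝ) {k R : ℝ} (hk : 0 < k) (hR : 0 ≤ R) :
    finitePart (fun r => f (k * r)) s R = k ^ (-s) * finitePart f s (k * R) := by
  have hks : k ^ (-s) * k ^ s = 1 := by rw [← Real.rpow_add hk, neg_add_cancel, Real.rpow_zero]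
  have hks' : k ^ (-s) = k⁻¹ * k ^ (-(s - 1)) := by
    rw [← Real.rpow_neg_one, ← Real.rpow_add hk]
    ring_nf
  have hint : ∫ r in (0 : ℝ)..R, (f (k * r) - f 0) * r ^ (s - 1) =
      k ^ (-(s - 1)) * ∫ r in (0 : ℝ)..R, (f (k * r) - f 0) * (k * r) ^ (s - 1) := by
    rw [← intervalIntegral.integral_const_mul]
    refine intervalIntegral.integral_congr fun r hr => ?_
    rw [uIcc_of_le hR] at hr
    simp only [Real.mul_rpow hk.le hr.1, Real.rpow_neg hk.le]
    field_simp
  have hscale := intervalIntegral.integral_comp_mul_left (a := 0) (b := R)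
    (fun r => (f r - f 0) * r ^ (s - 1)) hk.ne'
  simp only [finitePart, mul_zero]
  rw [hint, hscale, Real.mul_rpow hk.le hR, smul_eq_mul, mul_zero, mul_add]
  congr 1
  · rw [hks']
    ring
  · linear_combination (-(f 0 * R ^ s / s)) * hks

lemma integral_Ioc_sub_indicator_mul_add_rpow {f : ℝ → ℝ} {c p δ ε R : ℝ} (hf : Continuous f)
    (hδ : 0 < δ) (hε : 0 < ε) (hR : δ ≤ R) :
    ∫ r in Ioc 0 R, (f r - (Icc 0 δ).indicator (fun _ => c) r) * (r + ε) ^ p =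
      (∫ r in Ioc 0 δ, (f r - c) * (r + ε) ^ p) + ∫ r in δ..R, f r * (r + ε) ^ p := by
  have hpow : ContinuousOn (fun r : ℝ => (r + ε) ^ p) (Icc 0 R) :=
    (continuousOn_id.add continuousOn_const).rpow_const fun r hr =>
      Or.inl (add_pos_of_nonneg_of_pos hr.1 hε).ne'
  have hhead : EqOn (fun r => (f r - (Icc 0 δ).indicator (fun _ => c) r) * (r + ε) ^ p)
      (fun r => (f r - c) * (r + ε) ^ p) (Ioc 0 δ) := fun r hr => by
    simp only [indicator_of_mem (Ioc_subset_Icc_self hr)]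
  have htail : EqOn (fun r => (f r - (Icc 0 δ).indicator (fun _ => c) r) * (r + ε) ^ p)
      (fun r => f r * (r + ε) ^ p) (Ioc δ R) := fun r hr => by
    simp only [indicator_of_notMem (fun h : r ∈ Icc 0 δ => hr.1.not_ge h.2), sub_zero]
  have hheadint : IntegrableOn (fun r => (f r - c) * (r + ε) ^ p) (Ioc 0 δ) :=
    (((hf.sub continuous_const).continuousOn.mul (hpow.mono (Icc_subset_Icc_right hR)))
      |>.integrableOn_Icc).mono_set Ioc_subset_Icc_self
  have htailint : IntegrableOn (fun r => f r * (r + ε) ^ p) (Ioc δ R) :=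
    ((hf.continuousOn.mul (hpow.mono (Icc_subset_Icc_left hδ.le)))
      |>.integrableOn_Icc).mono_set Ioc_subset_Icc_self
  rw [← Ioc_union_Ioc_eq_Ioc hδ.le hR, setIntegral_union (Ioc_disjoint_Ioc_of_le le_rfl)
    measurableSet_Ioc (hheadint.congr_fun hhead.symm measurableSet_Ioc)
    (htailint.congr_fun htail.symm measurableSet_Ioc),
    setIntegral_congr_fun measurableSet_Ioc hhead, setIntegral_congr_fun measurableSet_Ioc htail,
    intervalIntegral.integral_of_le hR]

theorem exists_tendsto_integral_sub_indicator {f : ℝ → ℝ} {s δ L : ℝ} (hf : Continuous f)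
    (hs : s ≠ 0) (hδ : 0 < δ)
    (h0 : IntervalIntegrable (fun r => (f r - f 0) * r ^ (s - 1)) volume 0 δ)
    (hL : Tendsto (finitePart f s) atTop (𝓝 L)) :
    ∃ I : ℝ → ℝ,
      (∀ ε, 0 < ε → Tendsto (fun R => ∫ r in Ioc 0 R,
        (f r - (Icc 0 δ).indicator (fun _ => f 0) r) * (r + ε) ^ (s - 1)) atTop (𝓝 (I ε))) ∧
      Tendsto I (𝓝[>] 0) (𝓝 (L - f 0 * δ ^ s / s)) := by
  have htail : Tendsto (fun R => ∫ r in δ..R, f r * r ^ (s - 1)) atTop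
      (𝓝 (L - finitePart f s δ)) := by
    refine (hL.sub_const (finitePart f s δ)).congr' ?_
    filter_upwards [eventually_ge_atTop δ] with R hR
    rw [finitePart_eq_add_integral hf hs hδ hR h0, add_sub_cancel_left]
  obtain ⟨J, hJ, hJ0⟩ := exists_tendsto_integral_mul_add_rpow hδ hf.continuousOn htail
  have hhead := tendsto_integral_Ioc_mul_add_rpow
    ((hf.sub continuous_const).continuousOn.integrableOn_Icc.mono_set Ioc_subset_Icc_self)
    ((intervalIntegrable_iff_integrableOn_Ioc_of_le hδ.le).1 h0)
  refine ⟨fun ε => (∫ r in Ioc 0 δ, (f r - f 0) * (r + ε) ^ (s - 1)) + J ε, fun ε hε => ?_, ?_⟩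
  · refine ((hJ ε hε).const_add _).congr' ?_
    filter_upwards [eventually_ge_atTop δ] with R hR
    exact (integral_Ioc_sub_indicator_mul_add_rpow hf hδ hε hR).symm
  · have hvalue : L - f 0 * δ ^ s / s =
        (∫ r in Ioc 0 δ, (f r - f 0) * r ^ (s - 1)) + (L - finitePart f s δ) := by
      rw [finitePart, intervalIntegral.integral_of_le hδ.le]
      ring
    rw [hvalue]
    exact hhead.add hJ0

end FinitePart

section NormalizedBessel

/-- The `m`-th term of the power series of `(2 / x) ^ ν * J_ν(x)`. -/
noncomputable def normalizedBesselTerm (ν : ℝ) (m : ℕ) (x : ℝ) : ℝ :=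
  (-1) ^ m * (x / 2) ^ (2 * m) / (m.factorial * Real.Gamma (ν + m + 1))

/-- The normalized Bessel function `(2 / x) ^ ν * J_ν(x)`, extended to an even entire function of
`x` by its power series. -/
noncomputable def normalizedBessel (ν x : ℝ) : ℝ :=
  ∑' m : ℕ, normalizedBesselTerm ν m x

lemma rpow_mul_besselJ {ν x : ℝ} (hx : 0 < x) :
    (2 / x) ^ ν * besselJ ν x = normalizedBessel ν x := by
  rw [besselJ, normalizedBessel, ← tsum_mul_left]
  refine tsum_congr fun m => ?_
  have hcancel : (2 / x) ^ ν * (x / 2) ^ ν = 1 := by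
    rw [← Real.mul_rpow (by positivity) (by positivity), div_mul_div_cancel₀' two_ne_zero,
      div_self hx.ne', Real.one_rpow]
  have hpow : (x / 2) ^ (ν + 2 * (m : ℝ)) = (x / 2) ^ ν * (x / 2) ^ (2 * m) := by
    rw [Real.rpow_add (by positivity), ← Real.rpow_natCast (x / 2) (2 * m)]
    push_cast
    rfl
  rw [normalizedBesselTerm, hpow]
  linear_combination ((-1) ^ m * (x / 2) ^ (2 * m) / (m.factorial * Real.Gamma (ν + m + 1))) *
    hcancel

lemma pow_mul_Gamma_le_Gamma_add {a : ℝ} (ha : 0 < a) (m : ℕ) :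
    a ^ m * Real.Gamma a ≤ Real.Gamma (a + m) := by
  induction m with
  | zero => simp
  | succ m ih =>
    have ham : 0 < a + m := by positivity
    calc a ^ (m + 1) * Real.Gamma a = a * (a ^ m * Real.Gamma a) := by ring
      _ ≤ (a + m) * Real.Gamma (a + m) := by
        have := Real.Gamma_pos_of_pos ha
        gcongr
        exact le_add_of_nonneg_right m.cast_nonneg
      _ = Real.Gamma (a + (m + 1 : ℕ)) := by
        rw [← Real.Gamma_add_one ham.ne']
        push_cast
        ring_nf

lemma abs_normalizedBesselTerm (ν : ℝ) (m : ℕ) (x : ℝ) :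
    |normalizedBesselTerm ν m x| =
      (|x| / 2) ^ (2 * m) / (m.factorial * |Real.Gamma (ν + m + 1)|) := by
  simp [normalizedBesselTerm, abs_div, abs_mul, abs_pow]

lemma summable_normalizedBesselTerm {ν : ℝ} (hν : -1 < ν) (x : ℝ) :
    Summable fun m => normalizedBesselTerm ν m x := by
  have ha : 0 < ν + 1 := by linarith
  refine Summable.of_norm_bounded
    ((Real.summable_pow_div_factorial ((|x| / 2) ^ 2 / (ν + 1))).mul_right
      (Real.Gamma (ν + 1))⁻¹) fun m => ?_
  have := Real.Gamma_pos_of_pos ha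
  have hle : (ν + 1) ^ m * Real.Gamma (ν + 1) ≤ |Real.Gamma (ν + m + 1)| := by
    rw [add_right_comm]
    exact (pow_mul_Gamma_le_Gamma_add ha m).trans (le_abs_self _)
  rw [Real.norm_eq_abs, abs_normalizedBesselTerm]
  calc (|x| / 2) ^ (2 * m) / (m.factorial * |Real.Gamma (ν + m + 1)|)
      ≤ (|x| / 2) ^ (2 * m) / (m.factorial * ((ν + 1) ^ m * Real.Gamma (ν + 1))) := by gcongr
    _ = ((|x| / 2) ^ 2 / (ν + 1)) ^ m / m.factorial * (Real.Gamma (ν + 1))⁻¹ := by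
      rw [pow_mul, div_pow _ (ν + 1)]
      field_simp

lemma summable_normalizedBesselTerm_succ {ν : ℝ} (hν : -1 < ν) (x : ℝ) :
    Summable fun m => normalizedBesselTerm ν (m + 1) x :=
  (summable_nat_add_iff (f := fun m => normalizedBesselTerm ν m x) 1).2
    (summable_normalizedBesselTerm hν x)

lemma hasDerivAt_normalizedBesselTerm_succ (ν : ℝ) (m : ℕ) (x : ℝ) :
    HasDerivAt (normalizedBesselTerm ν (m + 1))
      (-(x / 2) * normalizedBesselTerm (ν + 1) m x) x := by
  have h := ((((hasDerivAt_id x).div_const 2).pow (2 * (m + 1))).const_mul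
    ((-1 : ℝ) ^ (m + 1))).div_const ((m + 1).factorial * Real.Gamma (ν + (m + 1 : ℕ) + 1))
  refine h.congr_deriv ?_
  have hΓ : ν + (m + 1 : ℕ) + 1 = ν + 1 + m + 1 := by push_cast; ring
  have hexp : 2 * (m + 1) - 1 = 2 * m + 1 := by omega
  simp only [normalizedBesselTerm, hΓ, hexp, Nat.factorial_succ, id]
  push_cast
  field_simp
  ring

lemma normalizedBesselTerm_zero (ν x : ℝ) :
    normalizedBesselTerm ν 0 x = (Real.Gamma (ν + 1))⁻¹ := by
  simp [normalizedBesselTerm]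

lemma normalizedBessel_eq_zero_add {ν : ℝ} (hν : -1 < ν) (x : ℝ) :
    normalizedBessel ν x =
      (Real.Gamma (ν + 1))⁻¹ + ∑' m : ℕ, normalizedBesselTerm ν (m + 1) x := by
  rw [normalizedBessel, (summable_normalizedBesselTerm hν x).tsum_eq_zero_add,
    normalizedBesselTerm_zero]

lemma normalizedBessel_zero_right {ν : ℝ} (hν : -1 < ν) :
    normalizedBessel ν 0 = (Real.Gamma (ν + 1))⁻¹ := by
  simp [normalizedBessel_eq_zero_add hν, normalizedBesselTerm]

lemma hasDerivAt_normalizedBessel {ν : ℝ} (hν : -1 < ν) (x : ℝ) :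
    HasDerivAt (normalizedBessel ν) (-(x / 2) * normalizedBessel (ν + 1) x) x := by
  have hx : x ∈ Metric.ball (0 : ℝ) (|x| + 1) := by simp
  have hbound : ∀ m, ∀ y ∈ Metric.ball (0 : ℝ) (|x| + 1),
      ‖-(y / 2) * normalizedBesselTerm (ν + 1) m y‖ ≤
        (|x| + 1) / 2 * |normalizedBesselTerm (ν + 1) m (|x| + 1)| := fun m y hy => by
    have hy' : |y| ≤ |(|x| + 1)| := by
      rw [abs_of_pos (by positivity : 0 < |x| + 1)]
      simpa using (mem_ball_zero_iff.1 hy).le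
    rw [norm_mul, norm_neg, norm_div, Real.norm_eq_abs, Real.norm_eq_abs, Real.norm_eq_abs, abs_two,
      abs_normalizedBesselTerm, abs_normalizedBesselTerm]
    gcongr
    exact hy'.trans_eq (abs_of_pos (by positivity))
  have hderiv := hasDerivAt_tsum_of_isPreconnected
    ((summable_normalizedBesselTerm (by linarith : -1 < ν + 1) (|x| + 1)).abs.mul_left
      ((|x| + 1) / 2))
    Metric.isOpen_ball (convex_ball 0 (|x| + 1)).isPreconnected
    (fun m y _ => hasDerivAt_normalizedBesselTerm_succ ν m y) hbound hx
    (summable_normalizedBesselTerm_succ hν x) hx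
  rw [tsum_mul_left] at hderiv
  exact (hderiv.const_add (Real.Gamma (ν + 1))⁻¹).congr_of_eventuallyEq
    (Eventually.of_forall (normalizedBessel_eq_zero_add hν))

lemma continuous_normalizedBessel {ν : ℝ} (hν : -1 < ν) : Continuous (normalizedBessel ν) :=
  continuous_iff_continuousAt.2 fun x => (hasDerivAt_normalizedBessel hν x).continuousAt

lemma normalizedBesselTerm_recurrence {ν : ℝ} (hν : -1 < ν) (m : ℕ) (x : ℝ) :
    normalizedBesselTerm ν (m + 1) x = (ν + 1) * normalizedBesselTerm (ν + 1) (m + 1) x -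
      (x / 2) ^ 2 * normalizedBesselTerm (ν + 2) m x := by
  have ha : 0 < ν + m + 2 := by linarith [(m.cast_nonneg : (0 : ℝ) ≤ m)]
  have hΓ := (Real.Gamma_pos_of_pos ha).ne'
  have hΓ₀ : ν + (m + 1 : ℕ) + 1 = ν + m + 2 := by push_cast; ring
  have hΓ₁ : ν + 1 + (m + 1 : ℕ) + 1 = ν + m + 2 + 1 := by push_cast; ring
  have hΓ₂ : ν + 2 + (m : ℝ) + 1 = ν + m + 2 + 1 := by ring
  simp only [normalizedBesselTerm, hΓ₀, hΓ₁, hΓ₂, Real.Gamma_add_one ha.ne', Nat.factorial_succ]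
  push_cast
  field_simp
  ring

lemma normalizedBessel_recurrence {ν : ℝ} (hν : -1 < ν) (x : ℝ) :
    normalizedBessel ν x = (ν + 1) * normalizedBessel (ν + 1) x -
      (x / 2) ^ 2 * normalizedBessel (ν + 2) x := by
  have ha : 0 < ν + 1 := by linarith
  have hshift := summable_normalizedBesselTerm_succ (by linarith : -1 < ν + 1) x
  have hΓ : (Real.Gamma (ν + 1))⁻¹ = (ν + 1) * (Real.Gamma (ν + 1 + 1))⁻¹ := by
    rw [Real.Gamma_add_one ha.ne']
    field_simp
  rw [normalizedBessel_eq_zero_add hν, normalizedBessel_eq_zero_add (by linarith : -1 < ν + 1),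
    tsum_congr fun m => normalizedBesselTerm_recurrence hν m x,
    (hshift.mul_left _).tsum_sub ((summable_normalizedBesselTerm (by linarith) x).mul_left _),
    tsum_mul_left, tsum_mul_left, hΓ, normalizedBessel]
  ring

lemma exists_abs_normalizedBessel_sub_le {ν : ℝ} (hν : -1 < ν) (R : ℝ) :
    ∃ M, ∀ x ∈ Icc 0 R, |normalizedBessel ν x - normalizedBessel ν 0| ≤ M * x ^ 2 := by
  obtain ⟨M, hM⟩ := (isCompact_Icc (a := 0) (b := R)).exists_bound_of_continuousOn
    (continuous_normalizedBessel (by linarith : -1 < ν + 1)).continuousOn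
  refine ⟨M / 2, fun x hx => ?_⟩
  have hderiv : ∀ t ∈ Icc 0 x, ‖-(t / 2) * normalizedBessel (ν + 1) t‖ ≤ x / 2 * M := fun t ht => by
    rw [norm_mul, norm_neg, Real.norm_of_nonneg (by linarith [ht.1])]
    have := hx.1
    exact mul_le_mul (by linarith [ht.2]) (hM t ⟨ht.1, ht.2.trans hx.2⟩) (norm_nonneg _)
      (by positivity)
  have hmvt := (convex_Icc 0 x).norm_image_sub_le_of_norm_hasDerivWithin_le
    (fun t _ => (hasDerivAt_normalizedBessel hν t).hasDerivWithinAt) hderiv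
    (left_mem_Icc.2 hx.1) (right_mem_Icc.2 hx.1)
  rw [sub_zero, Real.norm_of_nonneg hx.1] at hmvt
  exact hmvt.trans_eq (by ring)

lemma intervalIntegrable_normalizedBessel_sub_mul_rpow {ν s R : ℝ} (hν : -1 < ν) (hs : -2 < s)
    (hR : 0 ≤ R) : IntervalIntegrable
      (fun r => (normalizedBessel ν r - normalizedBessel ν 0) * r ^ (s - 1)) volume 0 R := by
  obtain ⟨M, hM⟩ := exists_abs_normalizedBessel_sub_le hν R
  exact intervalIntegrable_sub_mul_rpow (continuous_normalizedBessel hν) hs hR hM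

lemma tendsto_normalizedBessel_sub_mul_rpow {ν s : ℝ} (hν : -1 < ν) (hs : -2 < s) :
    Tendsto (fun r => (normalizedBessel ν r - normalizedBessel ν 0) * r ^ s) (𝓝[>] 0) (𝓝 0) := by
  obtain ⟨M, hM⟩ := exists_abs_normalizedBessel_sub_le hν 1
  have hs' : 0 < s + 2 := by linarith
  have hpow : Tendsto (fun r : ℝ => M * r ^ (s + 2)) (𝓝[>] 0) (𝓝 0) := by
    have h := (Real.continuousAt_rpow_const 0 (s + 2) (Or.inr hs'.le)).tendsto.const_mul M
    simpa [Real.zero_rpow hs'.ne'] using h.mono_left nhdsWithin_le_nhds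
  refine squeeze_zero_norm' ?_ hpow
  filter_upwards [Ioc_mem_nhdsGT (zero_lt_one' ℝ)] with r hr
  have hrs := Real.rpow_nonneg hr.1.le s
  rw [norm_mul, Real.norm_of_nonneg hrs, Real.norm_eq_abs, add_comm s 2, Real.rpow_add hr.1,
    Real.rpow_two, ← mul_assoc]
  exact mul_le_mul_of_nonneg_right (hM r (Ioc_subset_Icc_self hr)) hrs

lemma two_mul_mul_mul_le_abs_mul_add_sq (μ y p : ℝ) :
    2 * μ * (y * p) ≤ |μ| * (y ^ 2 + p ^ 2) := by
  calc 2 * μ * (y * p) ≤ |2 * μ * (y * p)| := le_abs_self _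
    _ = |μ| * (2 * |y| * |p|) := by
      rw [abs_mul, abs_mul, abs_mul, abs_two]
      ring
    _ ≤ |μ| * (y ^ 2 + p ^ 2) := by
      gcongr
      simpa only [sq_abs] using two_mul_le_add_sq |y| |p|

-- The modified energy `(y² + p²) exp (|μ| / x)` is nonincreasing.
lemma exists_abs_le_of_hasDerivAt_oscillator {y p : ℝ → ℝ} {μ a : ℝ} (ha : 0 < a)
    (hy : ∀ x ∈ Ici a, HasDerivAt y (p x) x)
    (hp : ∀ x ∈ Ici a, HasDerivAt p ((μ / x ^ 2 - 1) * y x) x) :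
    ∃ C, ∀ x ∈ Ici a, |y x| ≤ C := by
  set E : ℝ → ℝ := fun x => (y x ^ 2 + p x ^ 2) * Real.exp (|μ| / x)
  have hE : ∀ x ∈ Ici a, HasDerivAt E
      ((2 * μ * (y x * p x) - |μ| * (y x ^ 2 + p x ^ 2)) / x ^ 2 * Real.exp (|μ| / x)) x := by
    intro x hx
    have hx0 : x ≠ 0 := (ha.trans_le hx).ne'
    have hexp := ((hasDerivAt_inv hx0).const_mul |μ|).exp
    refine ((((hy x hx).pow 2).add ((hp x hx).pow 2)).mul hexp).congr_deriv ?_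
    simp only [← div_eq_mul_inv, Pi.add_apply, Pi.pow_apply]
    field_simp
    ring
  have hE' : ∀ x, (2 * μ * (y x * p x) - |μ| * (y x ^ 2 + p x ^ 2)) / x ^ 2 *
      Real.exp (|μ| / x) ≤ 0 := fun x =>
    mul_nonpos_of_nonpos_of_nonneg (div_nonpos_of_nonpos_of_nonneg
      (sub_nonpos.2 (two_mul_mul_mul_le_abs_mul_add_sq μ _ _)) (sq_nonneg x)) (Real.exp_nonneg _)
  have hanti : AntitoneOn E (Ici a) := antitoneOn_of_hasDerivWithinAt_nonpos (convex_Ici a)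
    (fun x hx => (hE x hx).continuousAt.continuousWithinAt)
    (fun x hx => (hE x (interior_subset hx)).hasDerivWithinAt) fun x _ => hE' x
  refine ⟨√(E a), fun x hx => Real.abs_le_sqrt ?_⟩
  have hx0 : 0 < x := ha.trans_le hx
  calc y x ^ 2 ≤ (y x ^ 2 + p x ^ 2) * 1 := by linarith [sq_nonneg (p x)]
    _ ≤ E x := mul_le_mul_of_nonneg_left (Real.one_le_exp (by positivity)) (by positivity)
    _ ≤ E a := hanti self_mem_Ici hx hx

lemma hasDerivAt_deriv_normalizedBessel {ν : ℝ} (hν : -1 < ν) (x : ℝ) :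
    HasDerivAt (fun x => -(x / 2) * normalizedBessel (ν + 1) x)
      ((ν + 1 / 2) * normalizedBessel (ν + 1) x - normalizedBessel ν x) x := by
  refine ((((hasDerivAt_id x).div_const 2).neg).mul
    (hasDerivAt_normalizedBessel (by linarith : -1 < ν + 1) x)).congr_deriv ?_
  have hν2 : ν + 1 + 1 = ν + 2 := by ring
  rw [normalizedBessel_recurrence hν, hν2]
  simp only [Pi.neg_apply, id]
  ring

lemma isBigO_normalizedBessel_atTop {ν : ℝ} (hν : -1 < ν) :
    normalizedBessel ν =O[atTop] fun x => x ^ (-(ν + 1 / 2)) := by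
  set b := ν + 1 / 2 with hb
  have hrpow : ∀ c : ℝ, ∀ x ∈ Ici (1 : ℝ), HasDerivAt (fun x : ℝ => x ^ c) (c * x ^ (c - 1)) x :=
    fun c x hx => Real.hasDerivAt_rpow_const (Or.inl (zero_lt_one.trans_le hx).ne')
  have hy : ∀ x ∈ Ici (1 : ℝ), HasDerivAt (fun x => x ^ b * normalizedBessel ν x)
      (b * x ^ (b - 1) * normalizedBessel ν x +
        x ^ b * (-(x / 2) * normalizedBessel (ν + 1) x)) x := fun x hx =>
    (hrpow b x hx).mul (hasDerivAt_normalizedBessel hν x)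
  have hp : ∀ x ∈ Ici (1 : ℝ), HasDerivAt (fun x => b * x ^ (b - 1) * normalizedBessel ν x +
      x ^ b * (-(x / 2) * normalizedBessel (ν + 1) x))
      ((b * (b - 1) / x ^ 2 - 1) * (x ^ b * normalizedBessel ν x)) x := fun x hx => by
    have hx0 : 0 < x := zero_lt_one.trans_le hx
    refine ((((hrpow (b - 1) x hx).const_mul b).mul (hasDerivAt_normalizedBessel hν x)).add
      ((hrpow b x hx).mul (hasDerivAt_deriv_normalizedBessel hν x))).congr_deriv ?_
    rw [← hb, Real.rpow_sub_one hx0.ne', Real.rpow_sub_one hx0.ne']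
    field_simp
    ring
  obtain ⟨C, hC⟩ := exists_abs_le_of_hasDerivAt_oscillator one_pos hy hp
  refine IsBigO.of_bound C ?_
  filter_upwards [eventually_ge_atTop 1] with x hx
  have hx0 : 0 < x := zero_lt_one.trans_le hx
  have hxb := Real.rpow_pos_of_pos hx0 b
  have h := hC x hx
  rw [abs_mul, abs_of_pos hxb] at h
  rw [Real.norm_eq_abs, Real.norm_of_nonneg (Real.rpow_nonneg hx0.le _), Real.rpow_neg hx0.le,
    ← div_eq_mul_inv, le_div_iff₀ hxb, mul_comm]
  exact h

end NormalizedBessel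

section GaussianSubordination

lemma integrableOn_rpow_mul_exp_neg_sq_mul {β r : ℝ} (hβ : 0 < β) (hr : 0 < r) :
    IntegrableOn (fun t : ℝ => t ^ (β - 1) * Real.exp (-(r ^ 2 * t))) (Ioi 0) := by
  simpa only [Real.rpow_one, neg_mul] using
    integrableOn_rpow_mul_exp_neg_mul_rpow (by linarith : -1 < β - 1) one_pos (pow_pos hr 2)

lemma integral_rpow_mul_exp_neg_sq_mul {β r : ℝ} (hβ : 0 < β) (hr : 0 < r) :
    ∫ t in Ioi (0 : ℝ), t ^ (β - 1) * Real.exp (-(r ^ 2 * t)) =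
      (r ^ (2 * β))⁻¹ * Real.Gamma β := by
  rw [Real.integral_rpow_mul_exp_neg_mul_Ioi hβ (pow_pos hr 2), one_div,
    Real.inv_rpow (sq_nonneg r), ← Real.rpow_natCast_mul hr.le, Nat.cast_ofNat]

lemma integrable_mul_gaussian_kernel {f : ℝ → ℝ} {s β : ℝ} (hfm : Measurable f) (hβ : 0 < β)
    (hf : IntegrableOn (fun r => f r * r ^ (s - 1)) (Ioi 0)) :
    Integrable (Function.uncurry fun r t : ℝ =>
        f r * r ^ (s - 1 + 2 * β) * (t ^ (β - 1) * Real.exp (-(r ^ 2 * t))))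
      ((volume.restrict (Ioi 0)).prod (volume.restrict (Ioi 0))) := by
  refine (integrable_prod_iff (Measurable.aestronglyMeasurable (by fun_prop))).2 ⟨?_, ?_⟩
  · filter_upwards [ae_restrict_mem measurableSet_Ioi] with r hr
    exact (integrableOn_rpow_mul_exp_neg_sq_mul hβ hr).const_mul (f r * r ^ (s - 1 + 2 * β))
  · refine (hf.norm.mul_const (Real.Gamma β)).congr ?_
    filter_upwards [ae_restrict_mem measurableSet_Ioi] with r (hr : 0 < r)
    have hkernel : ∀ t ∈ Ioi (0 : ℝ), ‖t ^ (β - 1) * Real.exp (-(r ^ 2 * t))‖ =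
        t ^ (β - 1) * Real.exp (-(r ^ 2 * t)) := fun t ht =>
      Real.norm_of_nonneg (mul_nonneg (Real.rpow_nonneg (le_of_lt ht) _) (Real.exp_nonneg _))
    simp only [Function.uncurry_apply_pair, norm_mul (f r * r ^ (s - 1 + 2 * β))]
    rw [integral_const_mul, setIntegral_congr_fun measurableSet_Ioi hkernel,
      integral_rpow_mul_exp_neg_sq_mul hβ hr, Real.rpow_add hr, norm_mul, norm_mul, norm_mul,
      Real.norm_of_nonneg (Real.rpow_nonneg hr.le (2 * β))]
    field_simp

lemma Gamma_mul_integral_eq_integral_gaussian {f : ℝ → ℝ} {s β : ℝ} (hfm : Measurable f)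
    (hβ : 0 < β) (hf : IntegrableOn (fun r => f r * r ^ (s - 1)) (Ioi 0)) :
    Real.Gamma β * ∫ r in Ioi (0 : ℝ), f r * r ^ (s - 1) =
      ∫ t in Ioi (0 : ℝ), t ^ (β - 1) *
        ∫ r in Ioi (0 : ℝ), f r * (r ^ (s - 1 + 2 * β) * Real.exp (-t * r ^ 2)) := by
  calc Real.Gamma β * ∫ r in Ioi (0 : ℝ), f r * r ^ (s - 1)
      = ∫ r in Ioi (0 : ℝ), ∫ t in Ioi (0 : ℝ),
          f r * r ^ (s - 1 + 2 * β) * (t ^ (β - 1) * Real.exp (-(r ^ 2 * t))) := by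
        rw [← integral_const_mul]
        refine setIntegral_congr_fun measurableSet_Ioi fun r (hr : 0 < r) => ?_
        simp only [integral_const_mul, integral_rpow_mul_exp_neg_sq_mul hβ hr, Real.rpow_add hr]
        field_simp
    _ = ∫ t in Ioi (0 : ℝ), ∫ r in Ioi (0 : ℝ),
          f r * r ^ (s - 1 + 2 * β) * (t ^ (β - 1) * Real.exp (-(r ^ 2 * t))) :=
        integral_integral_swap (integrable_mul_gaussian_kernel hfm hβ hf)
    _ = _ := by
        refine setIntegral_congr_fun measurableSet_Ioi fun t _ => ?_
        simp only [← integral_const_mul]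
        refine integral_congr_ae (Eventually.of_forall fun r => ?_)
        simp only [neg_mul, mul_comm t]
        ring

lemma integral_rpow_mul_exp_neg_div {s c : ℝ} (hs : 0 < s) (hc : 0 < c) :
    ∫ t in Ioi (0 : ℝ), t ^ (-s - 1) * Real.exp (-(c / t)) = (1 / c) ^ s * Real.Gamma s := by
  rw [← Real.integral_rpow_mul_exp_neg_mul_Ioi hs hc,
    ← integral_comp_rpow_Ioi _ (p := -1) (by norm_num)]
  refine setIntegral_congr_fun measurableSet_Ioi fun t (ht : 0 < t) => ?_
  simp only [abs_neg, abs_one, one_mul, smul_eq_mul, Real.rpow_neg_one]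
  rw [Real.inv_rpow ht.le, ← Real.rpow_neg ht.le, ← mul_assoc, ← Real.rpow_add ht,
    div_inv_eq_mul]
  ring_nf

end GaussianSubordination

section BesselMellin

/-- The value at `s` of the analytically continued Mellin transform of `normalizedBessel ν`. -/
noncomputable def besselMellin (ν s : ℝ) : ℝ :=
  2 ^ (s - 1) * Real.Gamma (s / 2) / Real.Gamma (ν + 1 - s / 2)

lemma besselMellin_eq_mul_succ {ν s : ℝ} (h : s ≠ 2 * ν + 2) :
    besselMellin ν s = (ν + 1 - s / 2) * besselMellin (ν + 1) s := by
  have h' : ν + 1 - s / 2 ≠ 0 := fun h0 => h (by linarith)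
  have hΓ : ν + 1 + 1 - s / 2 = ν + 1 - s / 2 + 1 := by ring
  rw [besselMellin, besselMellin, hΓ, Real.Gamma_add_one h', ← mul_div_assoc,
    mul_div_mul_left _ _ h']

lemma besselMellin_eq_div_succ_add_two {ν s : ℝ} (hs : s ≠ 0) :
    besselMellin ν s = besselMellin (ν + 1) (s + 2) / (2 * s) := by
  have hΓ : (s + 2) / 2 = s / 2 + 1 := by ring
  have hΓ' : ν + 1 + 1 - (s / 2 + 1) = ν + 1 - s / 2 := by ring
  have hpow : (2 : ℝ) ^ (s + 2 - 1) = 2 ^ (s - 1) * 4 := by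
    rw [add_sub_right_comm, Real.rpow_add two_pos, Real.rpow_two]
    norm_num
  rw [besselMellin, besselMellin, hΓ, hΓ', hpow, Real.Gamma_add_one (div_ne_zero hs two_ne_zero)]
  field_simp
  ring

lemma rpow_neg_mul_besselMellin {k : ℝ} (hk : 0 < k) (ν s : ℝ) :
    k ^ (-s) * besselMellin ν s =
      (k / 2) ^ (-s) * Real.Gamma (s / 2) / (2 * Real.Gamma (ν + 1 - s / 2)) := by
  rw [besselMellin, Real.div_rpow hk.le two_pos.le, Real.rpow_neg two_pos.le,
    Real.rpow_sub_one two_ne_zero]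
  field_simp

lemma abs_normalizedBesselTerm_eq {ν : ℝ} (hν : -1 < ν) (m : ℕ) (x : ℝ) :
    |normalizedBesselTerm ν m x| = (-1) ^ m * normalizedBesselTerm ν m x := by
  have hΓ : 0 < Real.Gamma (ν + m + 1) :=
    Real.Gamma_pos_of_pos (by linarith [(m.cast_nonneg : (0 : ℝ) ≤ m)])
  have hnonneg : 0 ≤ (x / 2) ^ (2 * m) / (m.factorial * Real.Gamma (ν + m + 1)) :=
    div_nonneg ((even_two_mul m).pow_nonneg _) (by positivity)
  rw [normalizedBesselTerm, mul_div_assoc, abs_mul, abs_of_nonneg hnonneg, ← mul_assoc, ← mul_pow]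
  simp

lemma normalizedBesselTerm_mul_gaussian (ν t : ℝ) (m : ℕ) {r : ℝ} (hr : 0 < r) :
    normalizedBesselTerm ν m r * (r ^ (2 * ν + 1) * Real.exp (-t * r ^ 2)) =
      (-1) ^ m / (4 ^ m * m.factorial * Real.Gamma (ν + m + 1)) *
        (r ^ (2 * (ν + m + 1) - 1) * Real.exp (-t * r ^ 2)) := by
  have hexp : 2 * (ν + m + 1) - 1 = 2 * ν + 1 + (2 * m : ℕ) := by
    push_cast
    ring
  have hfour : (2 : ℝ) ^ (2 * m) = 4 ^ m := by
    rw [pow_mul]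
    norm_num
  rw [normalizedBesselTerm, hexp, Real.rpow_add_natCast hr.ne', div_pow, hfour]
  ring

lemma integral_rpow_mul_exp_neg_mul_sq {a t : ℝ} (ha : 0 < a) (ht : 0 < t) :
    ∫ r in Ioi (0 : ℝ), r ^ (2 * a - 1) * Real.exp (-t * r ^ 2) =
      t ^ (-a) / 2 * Real.Gamma a := by
  have h := integral_rpow_mul_exp_neg_mul_rpow two_pos (by linarith : -1 < 2 * a - 1) ht
  have ha' : 2 * a - 1 + 1 = 2 * a := by ring
  simp only [Real.rpow_two] at h
  rw [h, ha', neg_div, mul_div_cancel_left₀ _ two_ne_zero]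
  ring

lemma integrableOn_normalizedBesselTerm_mul_gaussian {ν t : ℝ} (hν : -1 < ν) (ht : 0 < t)
    (m : ℕ) : IntegrableOn (fun r => normalizedBesselTerm ν m r *
      (r ^ (2 * ν + 1) * Real.exp (-t * r ^ 2))) (Ioi 0) := by
  have hexp : -1 < 2 * (ν + m + 1) - 1 := by linarith [(m.cast_nonneg : (0 : ℝ) ≤ m)]
  exact IntegrableOn.congr_fun ((integrableOn_rpow_mul_exp_neg_mul_sq ht hexp).const_mul _)
    (fun r hr => (normalizedBesselTerm_mul_gaussian ν t m hr).symm) measurableSet_Ioi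

lemma integral_normalizedBesselTerm_mul_gaussian {ν t : ℝ} (hν : -1 < ν) (ht : 0 < t) (m : ℕ) :
    ∫ r in Ioi (0 : ℝ), normalizedBesselTerm ν m r *
        (r ^ (2 * ν + 1) * Real.exp (-t * r ^ 2)) =
      t ^ (-(ν + 1)) / 2 * ((-(1 / 4 / t)) ^ m / m.factorial) := by
  have ha : 0 < ν + m + 1 := by linarith [(m.cast_nonneg : (0 : ℝ) ≤ m)]
  have hΓ := (Real.Gamma_pos_of_pos ha).ne'
  have hexp : -(ν + m + 1) = -(ν + 1) + -(m : ℝ) := by ring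
  rw [setIntegral_congr_fun measurableSet_Ioi fun r hr =>
      normalizedBesselTerm_mul_gaussian ν t m hr, integral_const_mul,
    integral_rpow_mul_exp_neg_mul_sq ha ht, hexp, Real.rpow_add ht, Real.rpow_neg ht.le (m : ℝ),
    Real.rpow_natCast, neg_pow (1 / 4 / t), div_pow, div_pow, one_pow]
  field_simp

lemma integral_normalizedBessel_mul_gaussian {ν t : ℝ} (hν : -1 < ν) (ht : 0 < t) :
    ∫ r in Ioi (0 : ℝ), normalizedBessel ν r * (r ^ (2 * ν + 1) * Real.exp (-t * r ^ 2)) =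
      t ^ (-(ν + 1)) / 2 * Real.exp (-(1 / 4 / t)) := by
  have hnorm : ∀ m, ∫ r in Ioi (0 : ℝ), ‖normalizedBesselTerm ν m r *
      (r ^ (2 * ν + 1) * Real.exp (-t * r ^ 2))‖ =
        t ^ (-(ν + 1)) / 2 * ((1 / 4 / t) ^ m / m.factorial) := fun m => by
    have habs : ∀ r ∈ Ioi (0 : ℝ), ‖normalizedBesselTerm ν m r *
        (r ^ (2 * ν + 1) * Real.exp (-t * r ^ 2))‖ = (-1) ^ m * (normalizedBesselTerm ν m r *
          (r ^ (2 * ν + 1) * Real.exp (-t * r ^ 2))) := fun r (hr : 0 < r) => by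
      rw [norm_mul, Real.norm_eq_abs, abs_normalizedBesselTerm_eq hν,
        Real.norm_of_nonneg (by positivity), mul_assoc]
    have hsign : (-1 : ℝ) ^ m * (-(1 / 4 / t)) ^ m = (1 / 4 / t) ^ m := by
      rw [← mul_pow, neg_one_mul, neg_neg]
    rw [setIntegral_congr_fun measurableSet_Ioi habs, integral_const_mul,
      integral_normalizedBesselTerm_mul_gaussian hν ht, ← hsign]
    ring
  have hsum := hasSum_integral_of_summable_integral_norm
    (integrableOn_normalizedBesselTerm_mul_gaussian hν ht)
    (by simpa only [hnorm] using (Real.summable_pow_div_factorial (1 / 4 / t)).mul_left _)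
  simp only [integral_normalizedBesselTerm_mul_gaussian hν ht, tsum_mul_right] at hsum
  have hexp := (NormedSpace.expSeries_div_hasSum_exp (-(1 / 4 / t))).mul_left (t ^ (-(ν + 1)) / 2)
  rw [← Real.exp_eq_exp_ℝ] at hexp
  exact hsum.unique hexp

lemma integrableOn_normalizedBessel_mul_rpow {ν s : ℝ} (hν : -1 < ν) (hs : 0 < s)
    (hsν : s < ν + 1 / 2) : IntegrableOn (fun r => normalizedBessel ν r * r ^ (s - 1)) (Ioi 0) := by
  have hcont := continuous_normalizedBessel hν
  have hzero : normalizedBessel ν =O[𝓝[>] 0] fun x : ℝ => x ^ (-(0 : ℝ)) := by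
    simpa using (hcont.tendsto 0).isBigO_one ℝ |>.mono nhdsWithin_le_nhds
  simpa only [mul_comm] using mellin_convergent_of_isBigO_scalar
    (hcont.locallyIntegrable.locallyIntegrableOn _) (isBigO_normalizedBessel_atTop hν) hsν hzero hs

lemma integral_normalizedBessel_mul_rpow {ν s : ℝ} (hs : 0 < s) (hsν : s < ν + 1 / 2) :
    ∫ r in Ioi (0 : ℝ), normalizedBessel ν r * r ^ (s - 1) = besselMellin ν s := by
  have hν : -1 < ν := by linarith
  have hβ : 0 < ν + 1 - s / 2 := by linarith
  have hs2 : 0 < s / 2 := by linarith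
  have hweight : s - 1 + 2 * (ν + 1 - s / 2) = 2 * ν + 1 := by ring
  have hexp : ν + 1 - s / 2 - 1 + -(ν + 1) = -(s / 2) - 1 := by ring
  have hfour : (1 / (1 / 4 : ℝ)) ^ (s / 2) = 2 * 2 ^ (s - 1) := by
    rw [← Real.rpow_one_add' two_pos.le (by linarith), add_sub_cancel, one_div_one_div,
      (by norm_num : (4 : ℝ) = 2 ^ (2 : ℝ)), ← Real.rpow_mul two_pos.le,
      mul_div_cancel₀ _ two_ne_zero]
  have h := Gamma_mul_integral_eq_integral_gaussian (continuous_normalizedBessel hν).measurable hβ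
    (integrableOn_normalizedBessel_mul_rpow hν hs hsν)
  rw [besselMellin, eq_div_iff (Real.Gamma_pos_of_pos hβ).ne', mul_comm, h, hweight]
  calc ∫ t in Ioi (0 : ℝ), t ^ (ν + 1 - s / 2 - 1) *
        ∫ r in Ioi (0 : ℝ), normalizedBessel ν r * (r ^ (2 * ν + 1) * Real.exp (-t * r ^ 2))
      = ∫ t in Ioi (0 : ℝ), 1 / 2 * (t ^ (-(s / 2) - 1) * Real.exp (-(1 / 4 / t))) := by
        refine setIntegral_congr_fun measurableSet_Ioi fun t (ht : 0 < t) => ?_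
        simp only [integral_normalizedBessel_mul_gaussian hν ht, ← hexp, Real.rpow_add ht]
        ring
    _ = 2 ^ (s - 1) * Real.Gamma (s / 2) := by
        rw [integral_const_mul, integral_rpow_mul_exp_neg_div hs2 (by norm_num), hfour]
        ring

end BesselMellin

section BesselFinitePart

lemma tendsto_normalizedBessel_mul_rpow_atTop {ν s : ℝ} (hν : -1 < ν) (hsν : s < ν + 1 / 2) :
    Tendsto (fun R => normalizedBessel ν R * R ^ s) atTop (𝓝 0) := by
  have hdecay := (isBigO_normalizedBessel_atTop hν).mul (isBigO_refl (fun x : ℝ => x ^ s) atTop)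
  refine (hdecay.congr' EventuallyEq.rfl ?_).trans_tendsto
    (tendsto_rpow_neg_atTop (sub_pos.2 hsν))
  filter_upwards [eventually_gt_atTop 0] with x hx
  rw [← Real.rpow_add hx]
  ring_nf

lemma tendsto_integral_normalizedBessel_mul_rpow {ν s : ℝ} (hs : 0 < s) (hsν : s < ν + 1 / 2) :
    Tendsto (fun R => ∫ r in (0 : ℝ)..R, normalizedBessel ν r * r ^ (s - 1)) atTop
      (𝓝 (besselMellin ν s)) := by
  rw [← integral_normalizedBessel_mul_rpow hs hsν]
  exact intervalIntegral_tendsto_integral_Ioi 0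
    (integrableOn_normalizedBessel_mul_rpow (by linarith) hs hsν) tendsto_id

lemma integral_eq_of_hasDerivAt_sub_mul_rpow {ν c s R : ℝ} {g : ℝ → ℝ} (hν : -1 < ν) (hs : -2 < s)
    (hR : 0 < R) (hg : IntervalIntegrable g volume 0 R)
    (hderiv : ∀ r, 0 < r → HasDerivAt
      (fun r => c * ((normalizedBessel ν r - normalizedBessel ν 0) * r ^ s)) (g r) r) :
    ∫ r in (0 : ℝ)..R, g r = c * ((normalizedBessel ν R - normalizedBessel ν 0) * R ^ s) := by
  have hzero := (tendsto_normalizedBessel_sub_mul_rpow hν hs).const_mul c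
  have hend := (hderiv R hR).continuousAt.tendsto.mono_left (nhdsWithin_le_nhds (s := Iio R))
  rw [intervalIntegral.integral_eq_sub_of_hasDerivAt_of_tendsto hR (fun r hr => hderiv r hr.1) hg
    hzero hend, mul_zero, sub_zero]

lemma hasDerivAt_normalizedBessel_sub_mul_rpow {ν : ℝ} (hν : -1 < ν) (s : ℝ) {r : ℝ} (hr : 0 < r) :
    HasDerivAt (fun r => (normalizedBessel ν r - normalizedBessel ν 0) * r ^ s)
      (s * ((normalizedBessel ν r - normalizedBessel ν 0) * r ^ (s - 1)) -
        normalizedBessel (ν + 1) r * r ^ (s + 1) / 2) r := by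
  refine (((hasDerivAt_normalizedBessel hν r).sub_const _).mul
    (Real.hasDerivAt_rpow_const (p := s) (Or.inl hr.ne'))).congr_deriv ?_
  rw [Real.rpow_add_one hr.ne']
  ring

lemma finitePart_normalizedBessel_eq_add_integral {ν s R : ℝ} (hν : -1 < ν) (hs : -2 < s)
    (hs0 : s ≠ 0) (hR : 0 < R) :
    finitePart (normalizedBessel ν) s R = normalizedBessel ν R * R ^ s / s +
      (∫ r in (0 : ℝ)..R, normalizedBessel (ν + 1) r * r ^ (s + 2 - 1)) / (2 * s) := by
  have hsub := intervalIntegrable_normalizedBessel_sub_mul_rpow hν hs hR.le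
  have hnext : IntervalIntegrable (fun r => normalizedBessel (ν + 1) r * r ^ (s + 2 - 1))
      volume 0 R := (intervalIntegral.intervalIntegrable_rpow' (by linarith)).continuousOn_mul
    (continuous_normalizedBessel (by linarith)).continuousOn
  have hparts := integral_eq_of_hasDerivAt_sub_mul_rpow (c := s⁻¹) hν hs hR
    (hsub.sub (hnext.div_const (2 * s))) fun r hr => by
      refine ((hasDerivAt_normalizedBessel_sub_mul_rpow hν s hr).const_mul s⁻¹).congr_deriv ?_
      rw [(by ring : s + 2 - 1 = s + 1)]
      field_simp
  rw [intervalIntegral.integral_sub hsub (hnext.div_const _),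
    intervalIntegral.integral_div] at hparts
  rw [finitePart]
  linear_combination hparts

lemma finitePart_normalizedBessel_eq_add_finitePart_succ {ν s R : ℝ} (hν : -1 < ν) (hs : -2 < s)
    (hs0 : s ≠ 0) (hR : 0 < R) :
    finitePart (normalizedBessel ν) s R = normalizedBessel (ν + 1) R * R ^ s / 2 +
      (ν + 1 - s / 2) * finitePart (normalizedBessel (ν + 1)) s R := by
  have hν' : -1 < ν + 1 := by linarith
  have hsub := intervalIntegrable_normalizedBessel_sub_mul_rpow hν hs hR.le
  have hsub' := intervalIntegrable_normalizedBessel_sub_mul_rpow hν' hs hR.le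
  have hzero : normalizedBessel ν 0 = (ν + 1) * normalizedBessel (ν + 1) 0 := by
    simp [normalizedBessel_recurrence hν 0]
  have hparts := integral_eq_of_hasDerivAt_sub_mul_rpow (c := 1 / 2) hν' hs hR
    (hsub.sub (hsub'.const_mul (ν + 1 - s / 2))) fun r hr => by
      refine ((hasDerivAt_normalizedBessel_sub_mul_rpow hν' s hr).const_mul (1 / 2)).congr_deriv ?_
      have hpow : r ^ (s + 1) = r ^ 2 * r ^ (s - 1) := by
        rw [← Real.rpow_two, ← Real.rpow_add hr]
        ring_nf
      rw [normalizedBessel_recurrence hν r, hzero, hpow, (by ring : ν + 1 + 1 = ν + 2)]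
      ring
  rw [intervalIntegral.integral_sub hsub (hsub'.const_mul _),
    intervalIntegral.integral_const_mul] at hparts
  rw [finitePart, finitePart, hzero]
  rw [hzero] at hparts
  field_simp at hparts ⊢
  linear_combination s * hparts

lemma tendsto_finitePart_normalizedBessel_of_lt_sub_half {ν s : ℝ} (hν : -1 < ν) (hs : -2 < s)
    (hs0 : s ≠ 0) (hsν : s < ν - 1 / 2) :
    Tendsto (finitePart (normalizedBessel ν) s) atTop (𝓝 (besselMellin ν s)) := by
  have hboundary := (tendsto_normalizedBessel_mul_rpow_atTop hν
    (by linarith : s < ν + 1 / 2)).div_const s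
  have hintegral := (tendsto_integral_normalizedBessel_mul_rpow (by linarith : 0 < s + 2)
    (by linarith : s + 2 < ν + 1 + 1 / 2)).div_const (2 * s)
  have hlim := hboundary.add hintegral
  rw [zero_div, zero_add, ← besselMellin_eq_div_succ_add_two hs0] at hlim
  refine hlim.congr' ?_
  filter_upwards [eventually_gt_atTop 0] with R hR
  exact (finitePart_normalizedBessel_eq_add_integral hν hs hs0 hR).symm

lemma tendsto_finitePart_normalizedBessel_of_succ {ν s : ℝ} (hν : -1 < ν) (hs : -2 < s)
    (hs0 : s ≠ 0) (hsν : s < ν + 3 / 2) (hsν' : s ≠ 2 * ν + 2)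
    (h : Tendsto (finitePart (normalizedBessel (ν + 1)) s) atTop (𝓝 (besselMellin (ν + 1) s))) :
    Tendsto (finitePart (normalizedBessel ν) s) atTop (𝓝 (besselMellin ν s)) := by
  have hboundary := (tendsto_normalizedBessel_mul_rpow_atTop (by linarith : -1 < ν + 1)
    (by linarith : s < ν + 1 + 1 / 2)).div_const 2
  have hlim := hboundary.add (h.const_mul (ν + 1 - s / 2))
  rw [zero_div, zero_add, ← besselMellin_eq_mul_succ hsν'] at hlim
  refine hlim.congr' ?_
  filter_upwards [eventually_gt_atTop 0] with R hR
  exact (finitePart_normalizedBessel_eq_add_finitePart_succ hν hs hs0 hR).symm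

theorem tendsto_finitePart_normalizedBessel {ν s : ℝ} (hν : -1 / 2 ≤ ν) (hs : -2 < s)
    (hs0 : s ≠ 0) (hsν : s < ν + 3 / 2) :
    Tendsto (finitePart (normalizedBessel ν) s) atTop (𝓝 (besselMellin ν s)) := by
  refine tendsto_finitePart_normalizedBessel_of_succ (by linarith) hs hs0 hsν
    (by linarith : s < 2 * ν + 2).ne ?_
  refine tendsto_finitePart_normalizedBessel_of_succ (by linarith) hs hs0 (by linarith)
    (by linarith : s < 2 * (ν + 1) + 2).ne ?_
  exact tendsto_finitePart_normalizedBessel_of_lt_sub_half (by linarith) hs hs0 (by linarith)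

end BesselFinitePart

section CutoffBessel

theorem exists_tendsto_integral_normalizedBessel_sub_indicator {ν s δ k : ℝ} (hν : -1 / 2 ≤ ν)
    (hs : -2 < s) (hs0 : s ≠ 0) (hsν : s < ν + 3 / 2) (hδ : 0 < δ) (hk : 0 < k) :
    ∃ I : ℝ → ℝ,
      (∀ ε, 0 < ε → Tendsto (fun R => ∫ r in Ioc 0 R, (normalizedBessel ν (k * r) -
        (Icc 0 δ).indicator (fun _ => normalizedBessel ν 0) r) * (r + ε) ^ (s - 1))
        atTop (𝓝 (I ε))) ∧
      Tendsto I (𝓝[>] 0)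
        (𝓝 (k ^ (-s) * besselMellin ν s - normalizedBessel ν 0 * δ ^ s / s)) := by
  have hν' : -1 < ν := by linarith
  have hcont : Continuous fun r => normalizedBessel ν (k * r) :=
    (continuous_normalizedBessel hν').comp (continuous_const_mul k)
  obtain ⟨M, hM⟩ := exists_abs_normalizedBessel_sub_le hν' (k * δ)
  have h0 := intervalIntegrable_sub_mul_rpow (M := M * k ^ 2) hcont hs hδ.le fun r hr => by
    have h := hM (k * r) ⟨mul_nonneg hk.le hr.1, mul_le_mul_of_nonneg_left hr.2 hk.le⟩
    rwa [mul_pow, ← mul_assoc, ← mul_zero k] at h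
  have hL : Tendsto (finitePart (fun r => normalizedBessel ν (k * r)) s) atTop
      (𝓝 (k ^ (-s) * besselMellin ν s)) := by
    refine (((tendsto_finitePart_normalizedBessel hν hs hs0 hsν).comp
      (tendsto_id.const_mul_atTop hk)).const_mul (k ^ (-s))).congr' ?_
    filter_upwards [eventually_ge_atTop 0] with R hR
    exact (finitePart_comp_mul_left _ s hk hR).symm
  simpa only [mul_zero] using exists_tendsto_integral_sub_indicator hcont hs0 hδ h0 hL

end CutoffBessel

theorem epsilon_limit_formula_general
    (D : ℝ) (hD : 1 ≤ D) (δ k α : ℝ) (hδ : 0 < δ) (hk : 0 < k)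
    (hα : α ∈ Ioo ((D - 1) / 2) (D + 2)) (hαD : α ≠ D) :
    ∃ I : ℝ → ℝ,
      (∀ ε ∈ Ioi (0 : ℝ),
        Tendsto
          (fun R : ℝ =>
            ∫ r in Ioc (0 : ℝ) R,
              ((2 / (k * r)) ^ ((D - 2) / 2) * besselJ ((D - 2) / 2) (k * r) -
                  indicator (Icc (0 : ℝ) δ) (fun _ => (1 : ℝ)) r / Real.Gamma (D / 2)) *
                (r + ε) ^ (D - 1 - α))
          atTop (𝓝 (I ε))) ∧
      Tendsto I (𝓝[>] 0)
        (𝓝 ((k / 2) ^ (α - D) * Real.Gamma ((D - α) / 2) / (2 * Real.Gamma (α / 2)) -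
          δ ^ (D - α) / ((D - α) * Real.Gamma (D / 2)))) := by
  have hzero : normalizedBessel ((D - 2) / 2) 0 = (Real.Gamma (D / 2))⁻¹ := by
    rw [normalizedBessel_zero_right (by linarith), (by ring : (D - 2) / 2 + 1 = D / 2)]
  obtain ⟨I, hI, hI0⟩ := exists_tendsto_integral_normalizedBessel_sub_indicator
    (ν := (D - 2) / 2) (s := D - α) (by linarith) (by linarith [hα.2]) (sub_ne_zero.2 hαD.symm)
    (by linarith [hα.1]) hδ hk
  refine ⟨I, fun ε hε => (hI ε hε).congr fun R => ?_, ?_⟩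
  · refine setIntegral_congr_fun measurableSet_Ioc fun r hr => ?_
    have hindicator : (Icc 0 δ).indicator (fun _ => normalizedBessel ((D - 2) / 2) 0) r =
        (Icc 0 δ).indicator (fun _ => (1 : ℝ)) r / Real.Gamma (D / 2) := by
      by_cases hrδ : r ∈ Icc 0 δ <;> simp [hrδ, hzero]
    simp only [hindicator, rpow_mul_besselJ (mul_pos hk hr.1), sub_right_comm D α 1]
  · have hhalf : (D - 2) / 2 + 1 - (D - α) / 2 = α / 2 := by ring
    rwa [rpow_neg_mul_besselMellin hk, hzero, hhalf, neg_sub, inv_mul_eq_div,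
      div_div, mul_comm (Real.Gamma (D / 2))] at hI0

/-- For `d ≥ 1`, `δ > 0`, `k > 0`, `α ∈ ((d−1)/2, d+2)` with `α ≠ d`,
`lim_{ε→0⁺} ∫_0^∞ [ (2/(kr))^{(d−2)/2} J_{(d−2)/2}(kr) − χ_{[0,δ]}(r)/Γ(d/2) ] (r+ε)^{d−1−α} dr
 = (k/2)^{α−d} Γ((d−α)/2)/(2 Γ(α/2)) − δ^{d−α}/((d−α) Γ(d/2))`,
where for each fixed `ε > 0` the integral over `(0, ∞)` is the improper limit
`lim_{R→∞} ∫_0^R`. -/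
theorem epsilon_limit_formula
    (d : ℕ) (hd : 1 ≤ d) (δ k α : ℝ) (hδ : 0 < δ) (hk : 0 < k)
    (hα : α ∈ Set.Ioo (((d : ℝ) - 1) / 2) ((d : ℝ) + 2)) (hαd : α ≠ (d : ℝ)) :
    ∃ I : ℝ → ℝ,
      (∀ ε ∈ Set.Ioi (0 : ℝ),
        Filter.Tendsto
          (fun R : ℝ =>
            ∫ r in Set.Ioc (0 : ℝ) R,
              ((2 / (k * r)) ^ (((d : ℝ) - 2) / 2) * besselJ (((d : ℝ) - 2) / 2) (k * r) -
                  Set.indicator (Set.Icc (0 : ℝ) δ) (fun _ => (1 : ℝ)) r /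
                    Real.Gamma ((d : ℝ) / 2)) *
                (r + ε) ^ ((d : ℝ) - 1 - α))
          Filter.atTop (nhds (I ε))) ∧
      Filter.Tendsto I (nhdsWithin 0 (Set.Ioi 0))
        (nhds ((k / 2) ^ (α - (d : ℝ)) * Real.Gamma (((d : ℝ) - α) / 2) /
            (2 * Real.Gamma (α / 2)) -
          δ ^ ((d : ℝ) - α) / (((d : ℝ) - α) * Real.Gamma ((d : ℝ) / 2)))) :=
  epsilon_limit_formula_general d (mod_cast hd) δ k α hδ hk hα hαd
end

section
/- Let d ≥ 1 be an integer, δ > 0, k > 0, and α ∈ ((d−1)/2, d+2) with α ≠ d. Let λ_δ(k) = (4 Γ(d/2+1)/δ²) Σ_{n=1}^∞ (−k²δ²/4)^n/(n! Γ(n + d/2)) · (d+2−α)/(d+2n−α) be the Fourier spectrum of the nonlocal diffusion operator with kernel ρ_δ(r) = 2Γ(d/2+1)(d+2−α)/(π^{d/2} δ^{d+2−α} r^α). Then δ^{d+2−α} λ_δ(k) / (4 Γ(d/2+1)(d+2−α)) = (k/2)^{α−d} Γ((d−α)/2)/(2 Γ(α/2)) − δ^{d−α}/((d−α) Γ(d/2))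 − lim_{R→∞} ∫_δ^R (2/(k r))^{(d−2)/2} J_{(d−2)/2}(k r) r^{d−1−α} dr, and the improper integral on the right converges. -/
open MeasureTheory Filter Set

/-!
Put `ν = (d - 2) / 2`, `σ = (d - α) / 2` and `t = (k r / 2)²`. Up to constants the integrand becomes
`t ^ (σ - 1) * C_ν(-t)`, where `C_ν` is the Bessel–Clifford function, and termwise integration gives
a primitive with no constant term. At `r = δ` this primitive is the series `λ_δ(k)` with its missing
zeroth term restored, so everything reduces to the limit of the primitive at infinity, which is
`Γ(σ) / Γ(ν + 1 - σ)`. For `0 < σ < ν / 2 + 1 / 4` the limit is the Mellin transform of `C_ν(-t)`,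
obtained from its Laplace transform `∫ t ^ ν * C_ν(-t) * exp(-y t) dt = y ^ (-ν - 1) * exp(-1 / y)`
by Fubini. Two recursions, `(ν, σ) → (ν + 1, σ)` and `(ν, σ) → (ν + 1, σ + 1)`, whose boundary
terms vanish because `C_ν(-t) = O(t ^ (-ν / 2 - 1 / 4))`, extend it to all `σ < ν / 2 + 3 / 4` that
are not poles of `Γ`; in terms of `α` this is the range `α > (d - 1) / 2`.
-/

open Asymptotics Bornology
open scoped Nat Topology

section ExponentialSeries

variable {𝕜 : Type*} [RCLike 𝕜] {a b : ℕ → 𝕜}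

/-- The exponential generating function `∑ bₙ zⁿ / n!` of a sequence `b`. For a bounded sequence
it is entire. -/
noncomputable def expGenFun (b : ℕ → 𝕜) (z : 𝕜) : 𝕜 :=
  ∑' n : ℕ, b n * z ^ n / n !

lemma norm_mul_pow_div_factorial_le {M r : ℝ} (hM : ∀ n, ‖b n‖ ≤ M) {z : 𝕜} (hz : ‖z‖ ≤ r)
    (n : ℕ) : ‖b n * z ^ n / (n ! : 𝕜)‖ ≤ M * (r ^ n / n !) := by
  rw [norm_div, norm_mul, norm_pow, RCLike.norm_natCast, mul_div_assoc]
  have hM₀ : 0 ≤ M := (norm_nonneg _).trans (hM 0)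
  gcongr
  exact hM n

lemma isBounded_range_succ (hb : IsBounded (range b)) : IsBounded (range fun n ↦ b (n + 1)) :=
  hb.subset (range_comp_subset_range (· + 1) b)

lemma summable_expGenFun (hb : IsBounded (range b)) (z : 𝕜) :
    Summable fun n : ℕ ↦ b n * z ^ n / n ! := by
  obtain ⟨M, hM⟩ := hb.exists_norm_le
  exact ((Real.summable_pow_div_factorial ‖z‖).mul_left M).of_norm_bounded
    (norm_mul_pow_div_factorial_le (fun n ↦ hM _ ⟨n, rfl⟩) le_rfl)

lemma hasDerivAt_mul_pow_div_factorial (c z : 𝕜) (n : ℕ) :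
    HasDerivAt (fun w ↦ c * w ^ (n + 1) / (n + 1)!) (c * z ^ n / n !) z := by
  convert! ((hasDerivAt_pow (n + 1) z).const_mul c).div_const ((n + 1)! : 𝕜) using 1
  have : (n : 𝕜) + 1 ≠ 0 := by norm_cast
  rw [Nat.factorial_succ]
  push_cast
  field_simp

theorem hasDerivAt_expGenFun (hb : IsBounded (range b)) (z : 𝕜) :
    HasDerivAt (expGenFun b) (expGenFun (fun n ↦ b (n + 1)) z) z := by
  obtain ⟨M, hM⟩ := hb.exists_norm_le
  have hsplit : expGenFun b = fun w ↦ b 0 + ∑' n : ℕ, b (n + 1) * w ^ (n + 1) / (n + 1)! := by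
    funext w
    simp [expGenFun, (summable_expGenFun hb w).tsum_eq_zero_add]
  have hz : z ∈ Metric.ball (0 : 𝕜) (‖z‖ + 1) := by simp
  have hbound : ∀ (n : ℕ), ∀ y ∈ Metric.ball (0 : 𝕜) (‖z‖ + 1),
      ‖b (n + 1) * y ^ n / (n ! : 𝕜)‖ ≤ M * ((‖z‖ + 1) ^ n / n !) := fun n y hy ↦
    norm_mul_pow_div_factorial_le (b := fun n ↦ b (n + 1)) (fun m ↦ hM _ ⟨m + 1, rfl⟩)
      (mem_ball_zero_iff.1 hy).le n
  have hsum : Summable fun n : ℕ ↦ b (n + 1) * z ^ (n + 1) / ((n + 1)! : 𝕜) :=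
    (summable_expGenFun hb z).comp_injective (add_left_injective 1)
  rw [hsplit]
  exact (hasDerivAt_tsum_of_isPreconnected
    ((Real.summable_pow_div_factorial (‖z‖ + 1)).mul_left M) Metric.isOpen_ball
    (convex_ball (0 : 𝕜) (‖z‖ + 1)).isPreconnected
    (fun n y _ ↦ hasDerivAt_mul_pow_div_factorial (b (n + 1)) y n) hbound hz hsum hz).const_add
    (b 0)

lemma continuous_expGenFun (hb : IsBounded (range b)) : Continuous (expGenFun b) :=
  continuous_iff_continuousAt.2 fun z ↦ (hasDerivAt_expGenFun hb z).continuousAt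

lemma expGenFun_linear_combination (ha : IsBounded (range a)) (hb : IsBounded (range b))
    (p q z : 𝕜) :
    expGenFun (fun n ↦ p * a n + q * b n) z = p * expGenFun a z + q * expGenFun b z := by
  have hsum := ((summable_expGenFun ha z).hasSum.mul_left p).add
    ((summable_expGenFun hb z).hasSum.mul_left q)
  rw [expGenFun, expGenFun, expGenFun, ← hsum.tsum_eq]
  exact tsum_congr fun n ↦ by ring

-- The coefficients `n * b n` are those of the Euler operator `z d/dz`.
lemma expGenFun_add_natCast_mul (hb : IsBounded (range b)) (p z : 𝕜) :
    expGenFun (fun n ↦ (p + n) * b n) z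
      = p * expGenFun b z + z * expGenFun (fun n ↦ b (n + 1)) z := by
  have hEuler : HasSum (fun n : ℕ ↦ n * b n * z ^ n / n !)
      (z * expGenFun (fun n ↦ b (n + 1)) z) := by
    rw [← hasSum_nat_add_iff' 1]
    simp only [Finset.range_one, Finset.sum_singleton, Nat.cast_zero, zero_mul, zero_div, sub_zero]
    convert! (summable_expGenFun (isBounded_range_succ hb) z).hasSum.mul_left z using 2 with n
    have : (n : 𝕜) + 1 ≠ 0 := by norm_cast
    rw [Nat.factorial_succ]
    push_cast
    field_simp
    ring
  have hsum := ((summable_expGenFun hb z).hasSum.mul_left p).add hEuler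
  rw [expGenFun, expGenFun, ← hsum.tsum_eq]
  exact tsum_congr fun n ↦ by ring

end ExponentialSeries

section BesselClifford

variable {ν σ t : ℝ}

-- Also true at the poles of `Γ`, where `(Γ s)⁻¹ = 0` is the value of the entire function `1 / Γ`.
lemma inv_Gamma_eq_self_mul_inv_Gamma_add_one (s : ℝ) :
    (Real.Gamma s)⁻¹ = s * (Real.Gamma (s + 1))⁻¹ := by
  rcases eq_or_ne s 0 with rfl | hs
  · simp [Real.Gamma_zero]
  · rw [Real.Gamma_add_one hs]
    field_simp

lemma tendsto_Gamma_atTop : Tendsto Real.Gamma atTop atTop := by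
  refine tendsto_atTop_mono' _ ?_ (tendsto_atTop_add_const_right _ (-1) tendsto_id)
  filter_upwards [eventually_ge_atTop 3] with x hx
  have hx₂ : (2 : ℝ) ≤ x - 1 := by linarith
  have hone : 1 ≤ Real.Gamma (x - 1) :=
    Real.Gamma_two.symm.trans_le (Real.Gamma_strictMonoOn_Ici.monotoneOn self_mem_Ici hx₂ hx₂)
  calc x + -1 ≤ (x - 1) * Real.Gamma (x - 1) := by nlinarith
    _ = Real.Gamma x := by rw [← Real.Gamma_add_one (by linarith), sub_add_cancel]

lemma tendsto_const_add_natCast_atTop (s : ℝ) : Tendsto (fun n : ℕ ↦ s + n) atTop atTop :=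
  tendsto_atTop_add_const_left _ _ tendsto_natCast_atTop_atTop

lemma tendsto_inv_const_add_natCast (s : ℝ) :
    Tendsto (fun n : ℕ ↦ (s + n)⁻¹) atTop (𝓝 0) :=
  tendsto_inv_atTop_zero.comp (tendsto_const_add_natCast_atTop s)

lemma tendsto_inv_Gamma_const_add_natCast (s : ℝ) :
    Tendsto (fun n : ℕ ↦ (Real.Gamma (s + n))⁻¹) atTop (𝓝 0) :=
  tendsto_inv_atTop_zero.comp (tendsto_Gamma_atTop.comp (tendsto_const_add_natCast_atTop s))

lemma isBounded_range_inv_Gamma_add_natCast (s : ℝ) :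
    IsBounded (range fun n : ℕ ↦ (Real.Gamma (s + n))⁻¹) :=
  Metric.isBounded_range_of_tendsto _ (tendsto_inv_Gamma_const_add_natCast s)

/-- The Bessel–Clifford function `C_ν(z) = ∑ zⁿ / (n! Γ(ν + n + 1))`, the entire function with
`(2 / x) ^ ν * J_ν(x) = C_ν(-(x / 2)²)`. -/
noncomputable def besselClifford (ν : ℝ) : ℝ → ℝ :=
  expGenFun fun n ↦ (Real.Gamma (ν + 1 + n))⁻¹

lemma two_div_rpow_mul_besselJ {x : ℝ} (hx : 0 < x) (ν : ℝ) :
    (2 / x) ^ ν * besselJ ν x = besselClifford ν (-(x / 2) ^ 2) := by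
  rw [besselJ, besselClifford, expGenFun, ← tsum_mul_left]
  refine tsum_congr fun m ↦ ?_
  have hpow : (x / 2) ^ (ν + 2 * (m : ℝ)) = (x / 2) ^ ν * ((x / 2) ^ 2) ^ m := by
    rw [Real.rpow_add (by positivity), Real.rpow_mul (by positivity), Real.rpow_two,
      Real.rpow_natCast]
  have hcancel : (2 / x) ^ ν * (x / 2) ^ ν = 1 := by
    rw [← Real.mul_rpow (by positivity) (by positivity)]
    simp [hx.ne']
  rw [hpow, neg_pow ((x / 2) ^ 2), add_right_comm ν 1]
  linear_combination (-1) ^ m * ((x / 2) ^ 2) ^ m * (m ! * Real.Gamma (ν + m + 1))⁻¹ * hcancel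

lemma besselClifford_add_one (ν : ℝ) :
    besselClifford (ν + 1) = expGenFun fun n ↦ (Real.Gamma (ν + 1 + ↑(n + 1)))⁻¹ :=
  congrArg expGenFun <| funext fun n ↦ by rw [Nat.cast_add_one, add_right_comm (ν + 1), add_assoc]

lemma hasDerivAt_besselClifford (ν z : ℝ) :
    HasDerivAt (besselClifford ν) (besselClifford (ν + 1) z) z := by
  rw [besselClifford_add_one]
  exact hasDerivAt_expGenFun (isBounded_range_inv_Gamma_add_natCast (ν + 1)) z

lemma continuous_besselClifford (ν : ℝ) : Continuous (besselClifford ν) :=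
  continuous_expGenFun (isBounded_range_inv_Gamma_add_natCast (ν + 1))

lemma inv_Gamma_add_natCast_succ (ν : ℝ) (n : ℕ) :
    (Real.Gamma (ν + 1 + n))⁻¹ = (ν + 1 + n) * (Real.Gamma (ν + 1 + 1 + n))⁻¹ := by
  rw [inv_Gamma_eq_self_mul_inv_Gamma_add_one, add_right_comm (ν + 1)]

lemma besselClifford_recurrence (ν z : ℝ) :
    besselClifford ν z
      = (ν + 1) * besselClifford (ν + 1) z + z * besselClifford (ν + 1 + 1) z := by
  rw [besselClifford_add_one (ν + 1)]
  simp only [besselClifford, inv_Gamma_add_natCast_succ ν]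
  exact expGenFun_add_natCast_mul (isBounded_range_inv_Gamma_add_natCast (ν + 1 + 1)) (ν + 1) z

/-- The function `∑ zⁿ / (n! (σ + n) Γ(ν + n + 1))`, which is `∫₀¹ s ^ (σ - 1) * C_ν(s z) ds` for
`σ > 0` and continues this integral to all `σ` other than `0, -1, -2, …`. -/
noncomputable def unitMellin (ν σ : ℝ) : ℝ → ℝ :=
  expGenFun fun n ↦ (σ + n)⁻¹ * (Real.Gamma (ν + 1 + n))⁻¹

lemma isBounded_range_unitMellin_coeff (ν σ : ℝ) :
    IsBounded (range fun n : ℕ ↦ (σ + n)⁻¹ * (Real.Gamma (ν + 1 + n))⁻¹) :=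
  Metric.isBounded_range_of_tendsto _
    ((tendsto_inv_const_add_natCast σ).mul (tendsto_inv_Gamma_const_add_natCast (ν + 1)))

lemma unitMellin_add_one_add_one (ν σ : ℝ) :
    unitMellin (ν + 1) (σ + 1)
      = expGenFun fun n ↦ (σ + ↑(n + 1))⁻¹ * (Real.Gamma (ν + 1 + ↑(n + 1)))⁻¹ :=
  congrArg expGenFun <| funext fun n ↦ by
    rw [Nat.cast_add_one, add_right_comm σ, add_assoc σ, add_right_comm (ν + 1), add_assoc (ν + 1)]

lemma hasDerivAt_unitMellin (ν σ z : ℝ) :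
    HasDerivAt (unitMellin ν σ) (unitMellin (ν + 1) (σ + 1) z) z := by
  rw [unitMellin_add_one_add_one]
  exact hasDerivAt_expGenFun (isBounded_range_unitMellin_coeff ν σ) z

lemma besselClifford_eq_unitMellin (hσ : ∀ n : ℕ, σ + n ≠ 0) (ν z : ℝ) :
    besselClifford ν z = σ * unitMellin ν σ z + z * unitMellin (ν + 1) (σ + 1) z := by
  have h := expGenFun_add_natCast_mul (isBounded_range_unitMellin_coeff ν σ) σ z
  simp only [mul_inv_cancel_left₀ (hσ _)] at h
  rw [unitMellin_add_one_add_one]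
  exact h

lemma unitMellin_eq_add_unitMellin_succ (hσ : ∀ n : ℕ, σ + n ≠ 0) (ν z : ℝ) :
    unitMellin ν σ z = besselClifford (ν + 1) z + (ν + 1 - σ) * unitMellin (ν + 1) σ z := by
  have h := expGenFun_linear_combination (isBounded_range_inv_Gamma_add_natCast (ν + 1 + 1))
    (isBounded_range_unitMellin_coeff (ν + 1) σ) 1 (ν + 1 - σ) z
  rw [one_mul] at h
  rw [besselClifford, unitMellin, unitMellin, ← h]
  congr 1 with n
  rw [inv_Gamma_add_natCast_succ]
  field [hσ n]

/-- The primitive `t ^ σ * ∑ (-t)ⁿ / (n! (σ + n) Γ(ν + n + 1))` of `t ^ (σ - 1) * C_ν(-t)` on the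
positive half-line, normalised to have no constant term. -/
noncomputable def mellinPrimitive (ν σ t : ℝ) : ℝ :=
  t ^ σ * unitMellin ν σ (-t)

lemma hasDerivAt_mellinPrimitive (hσ : ∀ n : ℕ, σ + n ≠ 0) (ν : ℝ) (ht : 0 < t) :
    HasDerivAt (mellinPrimitive ν σ) (t ^ (σ - 1) * besselClifford ν (-t)) t := by
  convert! (Real.hasDerivAt_rpow_const (p := σ) (.inl ht.ne')).mul
    ((hasDerivAt_unitMellin ν σ (-t)).comp t (hasDerivAt_neg t)) using 1
  rw [besselClifford_eq_unitMellin hσ, Real.rpow_sub_one ht.ne', Function.comp_apply]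
  field

lemma mellinPrimitive_eq_add_succ (hσ : ∀ n : ℕ, σ + n ≠ 0) (ν t : ℝ) :
    mellinPrimitive ν σ t
      = t ^ σ * besselClifford (ν + 1) (-t) + (ν + 1 - σ) * mellinPrimitive (ν + 1) σ t := by
  rw [mellinPrimitive, unitMellin_eq_add_unitMellin_succ hσ, mellinPrimitive]
  ring

lemma mellinPrimitive_eq_div_exponent (hσ : ∀ n : ℕ, σ + n ≠ 0) (ν : ℝ) (ht : 0 < t) :
    mellinPrimitive ν σ t
      = (t ^ σ * besselClifford ν (-t) + mellinPrimitive (ν + 1) (σ + 1) t) / σ := by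
  have hσ₀ : σ ≠ 0 := by simpa using hσ 0
  rw [mellinPrimitive, mellinPrimitive, besselClifford_eq_unitMellin hσ, Real.rpow_add_one ht.ne']
  field

lemma continuous_mellinPrimitive (hσ : 0 ≤ σ) (ν : ℝ) : Continuous (mellinPrimitive ν σ) :=
  (Real.continuous_rpow_const hσ).mul
    ((continuous_expGenFun (isBounded_range_unitMellin_coeff ν σ)).comp continuous_neg)

lemma mellinPrimitive_zero (hσ : σ ≠ 0) (ν : ℝ) : mellinPrimitive ν σ 0 = 0 := by
  rw [mellinPrimitive, Real.zero_rpow hσ, zero_mul]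

end BesselClifford

section Decay

-- The derivative of `(u² + v²) exp (-Q)` is `-(2 q u v + |q| (u² + v²)) exp (-Q) ≤ 0`.
theorem oscillator_energy_le {u v q Q : ℝ → ℝ} {a : ℝ}
    (hu : ∀ x, a ≤ x → HasDerivAt u (v x) x)
    (hv : ∀ x, a ≤ x → HasDerivAt v (-(1 + q x) * u x) x)
    (hQ : ∀ x, a ≤ x → HasDerivAt Q |q x| x) {x : ℝ} (hx : a ≤ x) :
    u x ^ 2 + v x ^ 2 ≤ (u a ^ 2 + v a ^ 2) * Real.exp (Q x - Q a) := by
  set E : ℝ → ℝ := fun y ↦ (u y ^ 2 + v y ^ 2) * Real.exp (-Q y)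
  have hE (y : ℝ) (hy : a ≤ y) : HasDerivAt E
      (-(2 * q y * u y * v y + |q y| * (u y ^ 2 + v y ^ 2)) * Real.exp (-Q y)) y := by
    convert! (((hu y hy).pow 2).add ((hv y hy).pow 2)).mul (hQ y hy).neg.exp using 1
    simp only [Nat.cast_ofNat, Nat.add_one_sub_one, pow_one, Pi.add_apply, Pi.pow_apply,
      Pi.neg_apply]
    ring
  have hE_nonpos (y : ℝ) :
      -(2 * q y * u y * v y + |q y| * (u y ^ 2 + v y ^ 2)) * Real.exp (-Q y) ≤ 0 := by
    have huv : |2 * u y * v y| ≤ u y ^ 2 + v y ^ 2 :=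
      abs_le.2 ⟨by linarith [sq_nonneg (u y + v y), add_sq (u y) (v y)], two_mul_le_add_sq _ _⟩
    have hquv : -(q y * (2 * u y * v y)) ≤ |q y| * (u y ^ 2 + v y ^ 2) :=
      calc -(q y * (2 * u y * v y)) ≤ |q y * (2 * u y * v y)| := neg_le_abs _
        _ = |q y| * |2 * u y * v y| := abs_mul _ _
        _ ≤ |q y| * (u y ^ 2 + v y ^ 2) := by gcongr
    exact mul_nonpos_of_nonpos_of_nonneg (by linarith) (Real.exp_pos _).le
  have hanti : AntitoneOn E (Ici a) :=
    antitoneOn_of_hasDerivWithinAt_nonpos (convex_Ici a)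
      (fun y hy ↦ (hE y hy).continuousAt.continuousWithinAt)
      (fun y hy ↦ (hE y (interior_subset hy)).hasDerivWithinAt) (fun y _ ↦ hE_nonpos y)
  calc u x ^ 2 + v x ^ 2 = E x * Real.exp (Q x) := by
        rw [mul_assoc, ← Real.exp_add, neg_add_cancel, Real.exp_zero, mul_one]
    _ ≤ E a * Real.exp (Q x) := by gcongr; exact hanti self_mem_Ici hx hx
    _ = (u a ^ 2 + v a ^ 2) * Real.exp (Q x - Q a) := by
        rw [mul_assoc, ← Real.exp_add, neg_add_eq_sub]

/-- The Liouville normal form `√x * J_ν(x)` of the Bessel function, up to a constant factor. It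
solves `u'' = -(1 - (ν² - 1/4) / x²) u`. -/
noncomputable def besselNormalForm (ν x : ℝ) : ℝ :=
  x ^ (ν + 1 / 2) * besselClifford ν (-(x / 2) ^ 2)

/-- The derivative of `besselNormalForm ν` on the positive half-line. -/
noncomputable def besselNormalFormDeriv (ν x : ℝ) : ℝ :=
  x ^ (ν - 1 / 2) * ((ν + 1 / 2) * besselClifford ν (-(x / 2) ^ 2)
    - x ^ 2 / 2 * besselClifford (ν + 1) (-(x / 2) ^ 2))

lemma hasDerivAt_besselClifford_neg_sq (ν x : ℝ) :
    HasDerivAt (fun y ↦ besselClifford ν (-(y / 2) ^ 2))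
      (-(x / 2) * besselClifford (ν + 1) (-(x / 2) ^ 2)) x := by
  convert! (hasDerivAt_besselClifford ν (-(x / 2) ^ 2)).comp x
    (((hasDerivAt_id x).div_const 2).pow 2).neg using 1
  simp only [Nat.cast_ofNat, id_eq, Nat.add_one_sub_one, pow_one]
  ring

lemma hasDerivAt_besselNormalForm (ν : ℝ) {x : ℝ} (hx : 0 < x) :
    HasDerivAt (besselNormalForm ν) (besselNormalFormDeriv ν x) x := by
  convert! (Real.hasDerivAt_rpow_const (p := ν + 1 / 2) (.inl hx.ne')).mul
    (hasDerivAt_besselClifford_neg_sq ν x) using 1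
  have hpow : x ^ (ν + 1 / 2) = x ^ (ν - 1 / 2) * x := by
    rw [← Real.rpow_add_one hx.ne']; ring_nf
  have hexp : ν + 1 / 2 - 1 = ν - 1 / 2 := by ring
  rw [besselNormalFormDeriv, hexp, hpow]
  ring

lemma hasDerivAt_besselNormalFormDeriv (ν : ℝ) {x : ℝ} (hx : 0 < x) :
    HasDerivAt (besselNormalFormDeriv ν)
      (-(1 + -(ν ^ 2 - 1 / 4) / x ^ 2) * besselNormalForm ν x) x := by
  convert! (Real.hasDerivAt_rpow_const (p := ν - 1 / 2) (.inl hx.ne')).mul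
    (((hasDerivAt_besselClifford_neg_sq ν x).const_mul (ν + 1 / 2)).sub
      (((hasDerivAt_pow 2 x).div_const 2).mul
        (hasDerivAt_besselClifford_neg_sq (ν + 1) x))) using 1
  have hpow : x ^ (ν + 1 / 2) = x ^ (ν - 1 / 2) * x := by
    rw [← Real.rpow_add_one hx.ne']; ring_nf
  rw [besselNormalForm, hpow, Real.rpow_sub_one hx.ne']
  have hrec := besselClifford_recurrence ν (-(x / 2) ^ 2)
  simp only [Pi.sub_apply, Pi.mul_apply]
  field_simp at hrec ⊢
  linear_combination -4 * x ^ 2 * hrec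

lemma besselNormalForm_sq_le (ν : ℝ) {x : ℝ} (hx : 1 ≤ x) :
    besselNormalForm ν x ^ 2 ≤ (besselNormalForm ν 1 ^ 2 + besselNormalFormDeriv ν 1 ^ 2)
      * Real.exp |ν ^ 2 - 1 / 4| := by
  have hQ (y : ℝ) (hy : 1 ≤ y) : HasDerivAt (fun y ↦ -|ν ^ 2 - 1 / 4| / y)
      |-(ν ^ 2 - 1 / 4) / y ^ 2| y := by
    convert! (hasDerivAt_const y (-|ν ^ 2 - 1 / 4|)).div (hasDerivAt_id y)
      (zero_lt_one.trans_le hy).ne' using 1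
    simp [abs_div, abs_sub_comm]
  have henergy := oscillator_energy_le
    (fun y hy ↦ hasDerivAt_besselNormalForm ν (zero_lt_one.trans_le hy))
    (fun y hy ↦ hasDerivAt_besselNormalFormDeriv ν (zero_lt_one.trans_le hy)) hQ hx
  calc besselNormalForm ν x ^ 2
      ≤ besselNormalForm ν x ^ 2 + besselNormalFormDeriv ν x ^ 2 :=
        le_add_of_nonneg_right (sq_nonneg _)
    _ ≤ _ := henergy
    _ ≤ _ := by
        gcongr
        have : 0 ≤ |ν ^ 2 - 1 / 4| / x := by positivity
        linarith [neg_div x |ν ^ 2 - 1 / 4|]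

theorem besselClifford_neg_isBigO (ν : ℝ) :
    (fun t ↦ besselClifford ν (-t)) =O[atTop] fun t : ℝ ↦ t ^ (-(ν / 2 + 1 / 4)) := by
  set K := (besselNormalForm ν 1 ^ 2 + besselNormalFormDeriv ν 1 ^ 2) * Real.exp |ν ^ 2 - 1 / 4|
  refine .of_bound (2 ^ (-(ν + 1 / 2)) * √K) ?_
  filter_upwards [eventually_ge_atTop 1] with t ht
  have ht₀ : 0 < t := zero_lt_one.trans_le ht
  have hx : 1 ≤ 2 * √t := by linarith [Real.one_le_sqrt.2 ht]
  have hform : besselNormalForm ν (2 * √t)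
      = (2 ^ (ν + 1 / 2) * t ^ (ν / 2 + 1 / 4)) * besselClifford ν (-t) := by
    rw [besselNormalForm, mul_div_cancel_left₀ _ two_ne_zero, Real.sq_sqrt ht₀.le,
      Real.mul_rpow zero_le_two (Real.sqrt_nonneg t), Real.sqrt_eq_rpow, ← Real.rpow_mul ht₀.le]
    ring_nf
  have hbound : |besselNormalForm ν (2 * √t)| ≤ √K := Real.abs_le_sqrt (besselNormalForm_sq_le ν hx)
  rw [hform, abs_mul, abs_of_pos (by positivity)] at hbound
  rw [Real.norm_eq_abs, Real.norm_of_nonneg (by positivity), Real.rpow_neg zero_le_two,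
    Real.rpow_neg ht₀.le, mul_right_comm, ← mul_inv, inv_mul_eq_div, le_div_iff₀' (by positivity)]
  exact hbound

variable {ν σ : ℝ}

lemma tendsto_rpow_mul_besselClifford_neg (hσ : σ < ν / 2 + 1 / 4) :
    Tendsto (fun t ↦ t ^ σ * besselClifford ν (-t)) atTop (𝓝 0) := by
  have h := (isBigO_refl (fun t : ℝ ↦ t ^ σ) atTop).mul (besselClifford_neg_isBigO ν)
  refine h.trans_tendsto ((tendsto_rpow_neg_atTop (sub_pos.2 hσ)).congr' ?_)
  filter_upwards [eventually_gt_atTop 0] with t ht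
  rw [← Real.rpow_add ht]
  ring_nf

lemma integrableOn_rpow_mul_besselClifford_neg (hσ₀ : 0 < σ) (hσ : σ < ν / 2 + 1 / 4) :
    IntegrableOn (fun t ↦ t ^ (σ - 1) * besselClifford ν (-t)) (Ioi 0) := by
  have hcont : Continuous fun t ↦ besselClifford ν (-t) :=
    (continuous_besselClifford ν).comp continuous_neg
  refine mellin_convergent_of_isBigO_scalar
    (hcont.continuousOn.locallyIntegrableOn measurableSet_Ioi)
    (besselClifford_neg_isBigO ν) hσ (b := 0) ?_ hσ₀
  simpa using (hcont.tendsto 0).mono_left nhdsWithin_le_nhds |>.isBigO_one ℝ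

end Decay

section Laplace

theorem hasSum_integral_rpow_mul_exp_neg_mul {c : ℕ → ℝ} {s y : ℝ} (hs : 0 < s) (hy : 0 < y)
    (hc : Summable fun n : ℕ ↦ |c n| * Real.Gamma (s + n) * (1 / y) ^ (s + n)) :
    HasSum (fun n : ℕ ↦ c n * Real.Gamma (s + n) * (1 / y) ^ (s + n))
      (∫ t in Ioi 0, t ^ (s - 1) * (∑' n : ℕ, c n * t ^ n) * Real.exp (-(y * t))) := by
  have hsn (n : ℕ) : 0 < s + n := by positivity
  have hterm (n : ℕ) : IntegrableOn (fun t ↦ t ^ (s + n - 1) * Real.exp (-(y * t))) (Ioi 0) := by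
    simpa only [Real.rpow_one, neg_mul] using
      integrableOn_rpow_mul_exp_neg_mul_rpow (by linarith [hsn n] : -1 < s + n - 1) one_pos hy
  have hnorm (n : ℕ) : ∫ t in Ioi 0, ‖c n * (t ^ (s + n - 1) * Real.exp (-(y * t)))‖
      = |c n| * Real.Gamma (s + n) * (1 / y) ^ (s + n) := by
    rw [mul_assoc, mul_comm (Real.Gamma _), ← Real.integral_rpow_mul_exp_neg_mul_Ioi (hsn n) hy,
      ← integral_const_mul]
    refine setIntegral_congr_fun measurableSet_Ioi fun t ht ↦ ?_
    have ht₀ : 0 < t := ht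
    rw [norm_mul, Real.norm_eq_abs, Real.norm_of_nonneg (by positivity)]
  have hsum := hasSum_integral_of_summable_integral_norm (fun n ↦ (hterm n).const_mul (c n))
    (by simpa only [hnorm] using hc)
  convert! hsum using 1
  · funext n
    rw [integral_const_mul, Real.integral_rpow_mul_exp_neg_mul_Ioi (hsn n) hy]
    ring
  · refine setIntegral_congr_fun measurableSet_Ioi fun t ht ↦ ?_
    have hpow (n : ℕ) : t ^ (s + n - 1) = t ^ (s - 1) * t ^ n := by
      rw [add_sub_right_comm, Real.rpow_add ht, Real.rpow_natCast]
    simp only [hpow, ← tsum_mul_left, ← tsum_mul_right]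
    exact tsum_congr fun n ↦ by ring

lemma integral_rpow_mul_rpow_mul_exp_neg_mul {q t : ℝ} (hq : 0 < q) (ht : 0 < t) :
    ∫ y in Ioi 0, t ^ q * (y ^ (q - 1) * Real.exp (-(t * y))) = Real.Gamma q := by
  rw [integral_const_mul, Real.integral_rpow_mul_exp_neg_mul_Ioi hq ht, ← mul_assoc,
    ← Real.mul_rpow ht.le (by positivity), mul_one_div_cancel ht.ne', Real.one_rpow, one_mul]

lemma integrable_prod_mul_rpow_mul_exp_neg_mul {h : ℝ → ℝ} {q : ℝ}
    (hh : IntegrableOn h (Ioi 0)) (hq : 0 < q) :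
    Integrable (fun p : ℝ × ℝ ↦ h p.1 * (p.1 ^ q * (p.2 ^ (q - 1) * Real.exp (-(p.1 * p.2)))))
      ((volume.restrict (Ioi 0)).prod (volume.restrict (Ioi 0))) := by
  have hmeas : Measurable fun p : ℝ × ℝ ↦ p.1 ^ q * (p.2 ^ (q - 1) * Real.exp (-(p.1 * p.2))) := by
    fun_prop
  have hnorm {t : ℝ} (ht : 0 < t) :
      ∫ y in Ioi 0, ‖h t * (t ^ q * (y ^ (q - 1) * Real.exp (-(t * y))))‖
        = ‖h t‖ * Real.Gamma q := by
    rw [← integral_rpow_mul_rpow_mul_exp_neg_mul hq ht, ← integral_const_mul]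
    refine setIntegral_congr_fun measurableSet_Ioi fun y hy ↦ ?_
    have hy₀ : 0 < y := hy
    rw [norm_mul, Real.norm_of_nonneg (by positivity : 0 ≤ t ^ q * _)]
  refine (integrable_prod_iff
    (hh.aestronglyMeasurable.comp_fst.mul hmeas.aestronglyMeasurable)).2 ⟨?_, ?_⟩
  · filter_upwards [ae_restrict_mem measurableSet_Ioi] with t ht
    refine (Integrable.of_integral_ne_zero ?_).const_mul (h t)
    rw [integral_rpow_mul_rpow_mul_exp_neg_mul hq ht]
    exact (Real.Gamma_pos_of_pos hq).ne'
  · refine (hh.norm.mul_const (Real.Gamma q)).congr ?_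
    filter_upwards [ae_restrict_mem measurableSet_Ioi] with t ht
    exact (hnorm ht).symm

theorem integral_rpow_mul_integral_rpow_mul_exp_neg_mul {h : ℝ → ℝ} {q : ℝ}
    (hh : IntegrableOn h (Ioi 0)) (hq : 0 < q) :
    ∫ y in Ioi 0, y ^ (q - 1) * ∫ t in Ioi 0, t ^ q * h t * Real.exp (-(y * t))
      = Real.Gamma q * ∫ t in Ioi 0, h t :=
  calc ∫ y in Ioi 0, y ^ (q - 1) * ∫ t in Ioi 0, t ^ q * h t * Real.exp (-(y * t))
      = ∫ y in Ioi 0, ∫ t in Ioi 0, h t * (t ^ q * (y ^ (q - 1) * Real.exp (-(t * y)))) := by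
        simp only [← integral_const_mul]
        congr! 4 with y
        ring_nf
    _ = ∫ t in Ioi 0, ∫ y in Ioi 0, h t * (t ^ q * (y ^ (q - 1) * Real.exp (-(t * y)))) :=
        (integral_integral_swap (integrable_prod_mul_rpow_mul_exp_neg_mul hh hq)).symm
    _ = ∫ t in Ioi 0, Real.Gamma q * h t := by
        refine setIntegral_congr_fun measurableSet_Ioi fun t ht ↦ ?_
        rw [integral_const_mul, integral_rpow_mul_rpow_mul_exp_neg_mul hq ht, mul_comm]
    _ = Real.Gamma q * ∫ t in Ioi 0, h t := integral_const_mul _ _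

lemma integral_rpow_mul_exp_neg_inv {s : ℝ} (hs : 0 < s) :
    ∫ y in Ioi 0, y ^ (-s - 1) * Real.exp (-y⁻¹) = Real.Gamma s := by
  rw [Real.Gamma_eq_integral hs, ← integral_comp_rpow_Ioi _ (neg_ne_zero.2 one_ne_zero)]
  refine setIntegral_congr_fun measurableSet_Ioi fun y hy ↦ ?_
  have hy₀ : 0 < y := hy
  simp only [abs_neg, abs_one, one_mul, smul_eq_mul, Real.rpow_neg_one, inv_inv]
  rw [mul_comm (Real.exp _), ← mul_assoc, ← Real.rpow_neg_one, ← Real.rpow_mul hy₀.le,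
    ← Real.rpow_add hy₀]
  ring_nf

end Laplace

section MellinTransform

variable {ν σ : ℝ}

lemma integral_rpow_mul_besselClifford_mul_exp_neg_mul (hν : 0 < ν + 1) {y : ℝ} (hy : 0 < y) :
    ∫ t in Ioi 0, t ^ ν * besselClifford ν (-t) * Real.exp (-(y * t))
      = y ^ (-(ν + 1)) * Real.exp (-y⁻¹) := by
  have hΓ (n : ℕ) : 0 < Real.Gamma (ν + 1 + n) := Real.Gamma_pos_of_pos (by positivity)
  have hpow (n : ℕ) : (1 / y) ^ (ν + 1 + n) = y ^ (-(ν + 1)) * y⁻¹ ^ n := by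
    rw [Real.rpow_add (by positivity), Real.rpow_natCast, one_div, Real.inv_rpow hy.le,
      Real.rpow_neg hy.le]
  set c : ℕ → ℝ := fun n ↦ (Real.Gamma (ν + 1 + n))⁻¹ * (-1) ^ n / n ! with hc
  have hseries (t : ℝ) : ∑' n, c n * t ^ n = besselClifford ν (-t) :=
    tsum_congr fun n ↦ by rw [hc, neg_pow t]; ring
  have hterm (n : ℕ) : c n * Real.Gamma (ν + 1 + n) * (1 / y) ^ (ν + 1 + n)
      = y ^ (-(ν + 1)) * ((-y⁻¹) ^ n / n !) := by
    rw [hpow, neg_pow y⁻¹]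
    field [(hΓ n).ne']
  have habs (n : ℕ) : |c n| * Real.Gamma (ν + 1 + n) * (1 / y) ^ (ν + 1 + n)
      = y ^ (-(ν + 1)) * (y⁻¹ ^ n / n !) := by
    rw [hpow, hc, abs_div, abs_mul, abs_pow, abs_neg, abs_one, one_pow, mul_one, Nat.abs_cast,
      abs_of_pos (inv_pos.2 (hΓ n))]
    field [(hΓ n).ne']
  have hsum := hasSum_integral_rpow_mul_exp_neg_mul (c := c) hν hy
    (by simpa only [habs] using (Real.summable_pow_div_factorial y⁻¹).mul_left _)
  simp only [hseries, hterm, add_sub_cancel_right] at hsum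
  rw [hsum.unique ((NormedSpace.expSeries_div_hasSum_exp (-y⁻¹)).mul_left _),
    Real.exp_eq_exp_ℝ]

theorem integral_rpow_mul_besselClifford_neg (hσ₀ : 0 < σ) (hσ : σ < ν / 2 + 1 / 4) :
    ∫ t in Ioi 0, t ^ (σ - 1) * besselClifford ν (-t)
      = Real.Gamma σ * (Real.Gamma (ν + 1 - σ))⁻¹ := by
  have hq : 0 < ν + 1 - σ := by linarith
  have hfubini := integral_rpow_mul_integral_rpow_mul_exp_neg_mul
    (integrableOn_rpow_mul_besselClifford_neg hσ₀ hσ) hq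
  have hlaplace : ∫ y in Ioi 0, y ^ (ν + 1 - σ - 1) * ∫ t in Ioi 0,
      t ^ (ν + 1 - σ) * (t ^ (σ - 1) * besselClifford ν (-t)) * Real.exp (-(y * t))
      = ∫ y in Ioi 0, y ^ (-σ - 1) * Real.exp (-y⁻¹) := by
    refine setIntegral_congr_fun measurableSet_Ioi fun y hy ↦ ?_
    have hinner : ∫ t in Ioi 0,
        t ^ (ν + 1 - σ) * (t ^ (σ - 1) * besselClifford ν (-t)) * Real.exp (-(y * t))
        = y ^ (-(ν + 1)) * Real.exp (-y⁻¹) := by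
      rw [← integral_rpow_mul_besselClifford_mul_exp_neg_mul (by linarith) hy]
      refine setIntegral_congr_fun measurableSet_Ioi fun t ht ↦ ?_
      simp only [← mul_assoc, ← Real.rpow_add ht]
      ring_nf
    simp only [hinner]
    rw [← mul_assoc, ← Real.rpow_add hy]
    ring_nf
  rw [← integral_rpow_mul_exp_neg_inv hσ₀, ← hlaplace, hfubini]
  field [(Real.Gamma_pos_of_pos hq).ne']

end MellinTransform

section Limit

variable {ν σ : ℝ}

lemma tendsto_mellinPrimitive_of_pos (hσ₀ : 0 < σ) (hσ : σ < ν / 2 + 1 / 4) :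
    Tendsto (mellinPrimitive ν σ) atTop (𝓝 (Real.Gamma σ * (Real.Gamma (ν + 1 - σ))⁻¹)) := by
  have hint := integrableOn_rpow_mul_besselClifford_neg hσ₀ hσ
  have hderiv : ∀ t ∈ Ioi (0 : ℝ),
      HasDerivAt (mellinPrimitive ν σ) (t ^ (σ - 1) * besselClifford ν (-t)) t := fun t ht ↦
    hasDerivAt_mellinPrimitive (fun n ↦ by positivity) ν ht
  have hlim := tendsto_limUnder_of_hasDerivAt_of_integrableOn_Ioi hderiv hint
  have hvalue := integral_Ioi_of_hasDerivAt_of_tendsto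
    (continuous_mellinPrimitive hσ₀.le ν).continuousWithinAt hderiv hint hlim
  rw [integral_rpow_mul_besselClifford_neg hσ₀ hσ, mellinPrimitive_zero hσ₀.ne', sub_zero] at hvalue
  rwa [hvalue]

lemma tendsto_mellinPrimitive_of_add_one_order (hσ : ∀ n : ℕ, σ + n ≠ 0)
    (hσν : σ < ν / 2 + 3 / 4)
    (h : Tendsto (mellinPrimitive (ν + 1) σ) atTop
      (𝓝 (Real.Gamma σ * (Real.Gamma (ν + 1 + 1 - σ))⁻¹))) :
    Tendsto (mellinPrimitive ν σ) atTop (𝓝 (Real.Gamma σ * (Real.Gamma (ν + 1 - σ))⁻¹)) := by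
  have hdecay := tendsto_rpow_mul_besselClifford_neg (by linarith : σ < (ν + 1) / 2 + 1 / 4)
  convert! hdecay.add (h.const_mul (ν + 1 - σ)) using 1
  · exact funext fun t ↦ mellinPrimitive_eq_add_succ hσ ν t
  · rw [inv_Gamma_eq_self_mul_inv_Gamma_add_one, add_sub_right_comm]
    ring_nf

lemma tendsto_mellinPrimitive_of_add_one_exponent (hσ : ∀ n : ℕ, σ + n ≠ 0)
    (hσν : σ < ν / 2 + 1 / 4)
    (h : Tendsto (mellinPrimitive (ν + 1) (σ + 1)) atTop
      (𝓝 (Real.Gamma (σ + 1) * (Real.Gamma (ν + 1 + 1 - (σ + 1)))⁻¹))) :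
    Tendsto (mellinPrimitive ν σ) atTop (𝓝 (Real.Gamma σ * (Real.Gamma (ν + 1 - σ))⁻¹)) := by
  have hσ₀ : σ ≠ 0 := by simpa using hσ 0
  have hlim : Real.Gamma σ * (Real.Gamma (ν + 1 - σ))⁻¹
      = (0 + Real.Gamma (σ + 1) * (Real.Gamma (ν + 1 + 1 - (σ + 1)))⁻¹) / σ := by
    rw [Real.Gamma_add_one hσ₀, add_sub_add_right_eq_sub]
    field
  rw [hlim]
  refine (((tendsto_rpow_mul_besselClifford_neg hσν).add h).div_const σ).congr' ?_
  filter_upwards [eventually_gt_atTop 0] with t ht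
  exact (mellinPrimitive_eq_div_exponent hσ ν ht).symm

theorem tendsto_mellinPrimitive_atTop (hσ : ∀ n : ℕ, σ + n ≠ 0) (hσν : σ < ν / 2 + 3 / 4) :
    Tendsto (mellinPrimitive ν σ) atTop (𝓝 (Real.Gamma σ * (Real.Gamma (ν + 1 - σ))⁻¹)) := by
  obtain ⟨N, hN⟩ : ∃ N : ℕ, -σ < N := exists_nat_gt (-σ)
  induction N generalizing ν σ with
  | zero =>
    have hσ₀ : 0 < σ := by simpa using hN
    exact tendsto_mellinPrimitive_of_add_one_order hσ hσν
      (tendsto_mellinPrimitive_of_pos hσ₀ (by linarith))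
  | succ N ih =>
    have hσ' (n : ℕ) : σ + 1 + n ≠ 0 := by simpa [add_assoc, add_comm (1 : ℝ)] using hσ (n + 1)
    have hN' : -(σ + 1) < N := by push_cast at hN; linarith
    exact tendsto_mellinPrimitive_of_add_one_order hσ hσν
      (tendsto_mellinPrimitive_of_add_one_exponent hσ (by linarith) (ih hσ' (by linarith) hN'))

end Limit

section RadialIntegral

variable {ν σ k r : ℝ}

/-- The primitive `r ^ (2σ) / 2 * ∑ (-(k r / 2)²)ⁿ / (n! (σ + n) Γ(ν + n + 1))` of
`(2 / (k r)) ^ ν * J_ν(k r) * r ^ (2σ - 1)`, normalised to have no constant term. -/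
noncomputable def radialPrimitive (ν σ k r : ℝ) : ℝ :=
  r ^ (2 * σ) / 2 * unitMellin ν σ (-(k * r / 2) ^ 2)

lemma hasDerivAt_radialPrimitive (hσ : ∀ n : ℕ, σ + n ≠ 0) (ν k : ℝ) (hr : 0 < r) :
    HasDerivAt (radialPrimitive ν σ k)
      (besselClifford ν (-(k * r / 2) ^ 2) * r ^ (2 * σ - 1)) r := by
  have hinner : HasDerivAt (fun r ↦ -(k * r / 2) ^ 2) (-(k ^ 2 * r / 2)) r := by
    convert! ((((hasDerivAt_id r).const_mul k).div_const 2).pow 2).neg using 1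
    simp only [Nat.cast_ofNat, id_eq, Nat.add_one_sub_one, pow_one, mul_one]
    ring
  convert! ((Real.hasDerivAt_rpow_const (p := 2 * σ) (.inl hr.ne')).div_const 2).mul
    ((hasDerivAt_unitMellin ν σ (-(k * r / 2) ^ 2)).comp r hinner) using 1
  rw [besselClifford_eq_unitMellin hσ, Real.rpow_sub_one hr.ne', Function.comp_apply]
  field

lemma radialPrimitive_eq_mellinPrimitive (hk : 0 < k) (hr : 0 < r) (ν σ : ℝ) :
    radialPrimitive ν σ k r
      = (k / 2) ^ (-(2 * σ)) / 2 * mellinPrimitive ν σ ((k * r / 2) ^ 2) := by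
  have hpow : ((k * r / 2) ^ 2) ^ σ = (k / 2) ^ (2 * σ) * r ^ (2 * σ) := by
    rw [← Real.rpow_natCast_mul (by positivity), mul_div_right_comm,
      Real.mul_rpow (by positivity) hr.le, Nat.cast_ofNat]
  rw [radialPrimitive, mellinPrimitive, hpow, Real.rpow_neg (by positivity)]
  field

lemma tendsto_radialPrimitive_atTop (hσ : ∀ n : ℕ, σ + n ≠ 0) (hσν : σ < ν / 2 + 3 / 4)
    (hk : 0 < k) :
    Tendsto (radialPrimitive ν σ k) atTop
      (𝓝 ((k / 2) ^ (-(2 * σ)) / 2 * (Real.Gamma σ * (Real.Gamma (ν + 1 - σ))⁻¹))) := by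
  have hsq : Tendsto (fun r ↦ (k * r / 2) ^ 2) atTop atTop :=
    (tendsto_pow_atTop two_ne_zero).comp
      ((tendsto_id.const_mul_atTop hk).atTop_div_const two_pos)
  refine (((tendsto_mellinPrimitive_atTop hσ hσν).comp hsq).const_mul _).congr' ?_
  filter_upwards [eventually_gt_atTop 0] with r hr
  exact (radialPrimitive_eq_mellinPrimitive hk hr ν σ).symm

theorem integral_besselJ_mul_rpow (hσ : ∀ n : ℕ, σ + n ≠ 0) (ν : ℝ) (hk : 0 < k) {δ R : ℝ}
    (hδ : 0 < δ) (hR : δ ≤ R) :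
    ∫ r in Ioc δ R, (2 / (k * r)) ^ ν * besselJ ν (k * r) * r ^ (2 * σ - 1)
      = radialPrimitive ν σ k R - radialPrimitive ν σ k δ := by
  have hpos {r : ℝ} (hr : r ∈ uIcc δ R) : 0 < r := hδ.trans_le (uIcc_of_le hR ▸ hr).1
  have hcont : ContinuousOn (fun r ↦ besselClifford ν (-(k * r / 2) ^ 2) * r ^ (2 * σ - 1))
      (uIcc δ R) :=
    ((continuous_besselClifford ν).comp (by fun_prop)).continuousOn.mul fun r hr ↦
      (Real.continuousAt_rpow_const r _ (.inl (hpos hr).ne')).continuousWithinAt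
  rw [← intervalIntegral.integral_eq_sub_of_hasDerivAt
    (fun r hr ↦ hasDerivAt_radialPrimitive hσ ν k (hpos hr)) hcont.intervalIntegrable,
    intervalIntegral.integral_of_le hR]
  refine setIntegral_congr_fun measurableSet_Ioc fun r hr ↦ ?_
  simp only [two_div_rpow_mul_besselJ (mul_pos hk (hδ.trans hr.1)) ν]

theorem tendsto_integral_besselJ_mul_rpow (hσ : ∀ n : ℕ, σ + n ≠ 0) (hσν : σ < ν / 2 + 3 / 4)
    (hk : 0 < k) {δ : ℝ} (hδ : 0 < δ) :
    Tendsto (fun R ↦ ∫ r in Ioc δ R, (2 / (k * r)) ^ ν * besselJ ν (k * r) * r ^ (2 * σ - 1)) atTop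
      (𝓝 ((k / 2) ^ (-(2 * σ)) / 2 * (Real.Gamma σ * (Real.Gamma (ν + 1 - σ))⁻¹)
        - radialPrimitive ν σ k δ)) := by
  refine ((tendsto_radialPrimitive_atTop hσ hσν hk).sub_const _).congr' ?_
  filter_upwards [eventually_ge_atTop δ] with R hR
  exact (integral_besselJ_mul_rpow hσ ν hk hδ hR).symm

end RadialIntegral

section Spectrum

/-- The Fourier spectrum `λ_δ(k)` of the nonlocal diffusion operator with kernel
`2 Γ(d/2 + 1) (d + 2 - α) / (π ^ (d/2) δ ^ (d + 2 - α) r ^ α)` in dimension `d`, with `d` allowed to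
be any real number. The summation index is one less than in the paper. -/
noncomputable def fourierSpectrum (d α δ k : ℝ) : ℝ :=
  4 * Real.Gamma (d / 2 + 1) / δ ^ 2 *
    ∑' n : ℕ, (-(k ^ 2 * δ ^ 2) / 4) ^ (n + 1) / ((n + 1)! * Real.Gamma ((n + 1) + d / 2)) *
      ((d + 2 - α) / (d + 2 * (n + 1) - α))

lemma tsum_fourierSpectrum_eq {d α : ℝ} (hα : ∀ n : ℕ, α ≠ d + 2 * n) (z : ℝ) :
    ∑' n : ℕ, z ^ (n + 1) / ((n + 1)! * Real.Gamma ((n + 1) + d / 2)) *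
        ((d + 2 - α) / (d + 2 * (n + 1) - α))
      = (d + 2 - α) * (unitMellin ((d - 2) / 2) ((d - α) / 2) z / 2
          - 1 / ((d - α) * Real.Gamma (d / 2))) := by
  have hν : (d - 2) / 2 + 1 = d / 2 := by ring
  have hdα : d - α ≠ 0 := fun h ↦ hα 0 (by push_cast; linarith)
  have hterm (n : ℕ) : z ^ (n + 1) / ((n + 1)! * Real.Gamma ((n + 1) + d / 2)) *
        ((d + 2 - α) / (d + 2 * (n + 1) - α))
      = (d + 2 - α) / 2 * (((d - α) / 2 + ↑(n + 1))⁻¹ * (Real.Gamma (d / 2 + ↑(n + 1)))⁻¹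
          * z ^ (n + 1) / (n + 1)!) := by
    have hden : (d - α) / 2 + ↑(n + 1) = (d + 2 * (n + 1) - α) / 2 := by push_cast; ring
    rw [hden, inv_div, add_comm (d / 2), Nat.cast_add_one]
    ring
  rw [unitMellin, expGenFun,
    (summable_expGenFun (isBounded_range_unitMellin_coeff _ _) z).tsum_eq_zero_add, hν,
    tsum_congr hterm, tsum_mul_left]
  simp only [Nat.cast_zero, add_zero, pow_zero, Nat.factorial_zero, Nat.cast_one]
  field

theorem fourierSpectrum_eq_radialPrimitive_sub {d α δ : ℝ} (hd : 0 < d)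
    (hα : ∀ n : ℕ, α ≠ d + 2 * n) (hδ : 0 < δ) (k : ℝ) :
    δ ^ (d + 2 - α) * fourierSpectrum d α δ k / (4 * Real.Gamma (d / 2 + 1) * (d + 2 - α))
      = radialPrimitive ((d - 2) / 2) ((d - α) / 2) k δ
        - δ ^ (d - α) / ((d - α) * Real.Gamma (d / 2)) := by
  have hΓ : Real.Gamma (d / 2 + 1) ≠ 0 := (Real.Gamma_pos_of_pos (by positivity)).ne'
  have hα₁ : d + 2 - α ≠ 0 := fun h ↦ hα 1 (by push_cast; linarith)
  have hz : -(k ^ 2 * δ ^ 2) / 4 = -(k * δ / 2) ^ 2 := by ring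
  have hexp : 2 * ((d - α) / 2) = d - α := by ring
  have hpow : δ ^ (d + 2 - α) = δ ^ (d - α) * δ ^ 2 := by
    rw [← Real.rpow_two, ← Real.rpow_add hδ, add_sub_right_comm]
  rw [fourierSpectrum, tsum_fourierSpectrum_eq hα, radialPrimitive, hz, hexp, hpow]
  field

end Spectrum

theorem fourier_spectrum_asymptotic_split_general
    (d δ k α : ℝ) (hd : 0 < d) (hδ : 0 < δ) (hk : 0 < k)
    (hα : (d - 1) / 2 < α) (hαd : ∀ n : ℕ, α ≠ d + 2 * n) :
    ∃ L : ℝ,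
      Tendsto
        (fun R : ℝ ↦ ∫ r in Ioc δ R,
          (2 / (k * r)) ^ ((d - 2) / 2) * besselJ ((d - 2) / 2) (k * r) * r ^ (d - 1 - α))
        atTop (𝓝 L) ∧
      δ ^ (d + 2 - α) * fourierSpectrum d α δ k / (4 * Real.Gamma (d / 2 + 1) * (d + 2 - α))
        = (k / 2) ^ (α - d) * Real.Gamma ((d - α) / 2) / (2 * Real.Gamma (α / 2))
          - δ ^ (d - α) / ((d - α) * Real.Gamma (d / 2)) - L := by
  have hσ (n : ℕ) : (d - α) / 2 + n ≠ 0 := fun h ↦ hαd n (by linarith)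
  have hlim := tendsto_integral_besselJ_mul_rpow hσ
    (by linarith : (d - α) / 2 < (d - 2) / 2 / 2 + 3 / 4) hk hδ
  have hexp : 2 * ((d - α) / 2) - 1 = d - 1 - α := by ring
  rw [hexp] at hlim
  refine ⟨_, hlim, ?_⟩
  have hΓarg : (d - 2) / 2 + 1 - (d - α) / 2 = α / 2 := by ring
  have hkexp : -(2 * ((d - α) / 2)) = α - d := by ring
  rw [fourierSpectrum_eq_radialPrimitive_sub hd hαd hδ, hΓarg, hkexp]
  ring

/-- With `λ_δ(k)` the (Maclaurin-series) Fourier spectrum of the nonlocal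
diffusion operator with kernel `ρ_δ(r) = 2Γ(d/2+1)(d+2−α)/(π^{d/2} δ^{d+2−α} r^α)`, for
`α ∈ ((d−1)/2, d+2)`, `α ≠ d`, one has
`δ^{d+2−α} λ_δ(k) / (4Γ(d/2+1)(d+2−α)) = (k/2)^{α−d} Γ((d−α)/2)/(2Γ(α/2))
 − δ^{d−α}/((d−α)Γ(d/2)) − lim_{R→∞} ∫_δ^R (2/(kr))^{(d−2)/2} J_{(d−2)/2}(kr) r^{d−1−α} dr`,
and the improper integral on the right converges. -/
theorem fourier_spectrum_asymptotic_split
    (d : ℕ) (hd : 1 ≤ d) (δ k α : ℝ) (hδ : 0 < δ) (hk : 0 < k)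
    (hα : α ∈ Set.Ioo (((d : ℝ) - 1) / 2) ((d : ℝ) + 2)) (hαd : α ≠ (d : ℝ)) :
    ∃ L : ℝ,
      Filter.Tendsto
        (fun R : ℝ =>
          ∫ r in Set.Ioc δ R,
            (2 / (k * r)) ^ (((d : ℝ) - 2) / 2) * besselJ (((d : ℝ) - 2) / 2) (k * r) *
              r ^ ((d : ℝ) - 1 - α))
        Filter.atTop (nhds L) ∧
      δ ^ ((d : ℝ) + 2 - α) *
          (4 * Real.Gamma ((d : ℝ) / 2 + 1) / δ ^ 2 *
            ∑' n : ℕ,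
              (-(k ^ 2 * δ ^ 2) / 4) ^ (n + 1) /
                  ((Nat.factorial (n + 1) : ℝ) * Real.Gamma (((n : ℝ) + 1) + (d : ℝ) / 2)) *
                (((d : ℝ) + 2 - α) / ((d : ℝ) + 2 * ((n : ℝ) + 1) - α))) /
          (4 * Real.Gamma ((d : ℝ) / 2 + 1) * ((d : ℝ) + 2 - α))
        = (k / 2) ^ (α - (d : ℝ)) * Real.Gamma (((d : ℝ) - α) / 2) /
            (2 * Real.Gamma (α / 2)) -
          δ ^ ((d : ℝ) - α) / (((d : ℝ) - α) * Real.Gamma ((d : ℝ) / 2)) - L := by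
  refine fourier_spectrum_asymptotic_split_general d δ k α (by exact_mod_cast hd) hδ hk hα.1
    fun n ↦ ?_
  rcases n with _ | n
  · simpa using hαd
  · exact ((hα.2).trans_le (by push_cast; linarith [n.cast_nonneg (α := ℝ)])).ne
end
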